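/- arXiv:1211.1299 — 2 statements merged into one kernel-verified Lean document; each statement's English description precedes it below -/
import Mathlib

section
/- For two gluable t-boundaried bipartite incidence graphs G and H (two-colored, with color classes forming independent sets), the hypergraph obtained from the glued graph equals the glued hypergraphs: H(G ⊕ H) = H(G) ⊕' H(H), where ⊕ is graph gluing and ⊕' is hypergraph gluing. -/
/-- A `t`-boundaried graph with vertex colors in `C`: a graph together with `t`
distinguished boundary vertices labeled `1, …, t` and a vertex coloring. -/
structure BGraph (t : ℕ) (C : Type) where
  V : Type
  graph : SimpleGraph V
  color : V → C
  bnd : Fin t → V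

/-- Two `t`-boundaried colored graphs are color-compatible if boundary vertices
with the same label have the same color. -/
def ColorCompat {t : ℕ} {C : Type} (G H : BGraph t C) : Prop :=
  ∀ i, G.color (G.bnd i) = H.color (H.bnd i)

/-- The canonical map from the vertices of `H` into the glued graph `G ⊕ H`:
boundary vertices of `H` are identified with the equally labeled boundary
vertices of `G`. -/
noncomputable def glueMap {t : ℕ} {C : Type} (G H : BGraph t C) (v : H.V) :
    G.V ⊕ {v : H.V // v ∉ Set.range H.bnd} :=
  open Classical in
  if h : ∃ i, H.bnd i = v then Sum.inl (G.bnd h.choose)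
  else Sum.inr ⟨v, fun hv => h hv⟩

/-- Gluing of two `t`-boundaried colored graphs: disjoint union, identifying
equally labeled boundary vertices (colors and boundary inherited from `G`). -/
noncomputable def glueGraph {t : ℕ} {C : Type} (G H : BGraph t C) : BGraph t C where
  V := G.V ⊕ {v : H.V // v ∉ Set.range H.bnd}
  graph := SimpleGraph.fromRel (fun x y =>
    (∃ u v, x = Sum.inl u ∧ y = Sum.inl v ∧ G.graph.Adj u v) ∨
    (∃ u v, x = glueMap G H u ∧ y = glueMap G H v ∧ H.graph.Adj u v))
  color := fun x => x.elim G.color (fun v => H.color v.1)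
  bnd := fun i => Sum.inl (G.bnd i)

/-- Isomorphism of colored graphs: a bijection of the vertices preserving
adjacency and colors (boundary labels are ignored). -/
def CIso {t : ℕ} {C : Type} (G H : BGraph t C) : Prop :=
  ∃ e : G.V ≃ H.V,
    (∀ u v, G.graph.Adj u v ↔ H.graph.Adj (e u) (e v)) ∧
    ∀ v, H.color (e v) = G.color v

/-- A `t`-boundaried hypergraph: vertices, hyperedges, an incidence relation,
and `t` labeled boundary objects, each of which is a vertex or a hyperedge. -/
structure BHyp (t : ℕ) where
  V : Type
  E : Type
  mem : V → E → Prop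
  bnd : Fin t → V ⊕ E

/-- Two `t`-boundaried hypergraphs are gluable if no vertex of one carries the
label of a hyperedge of the other. -/
def Gluable {t : ℕ} (G H : BHyp t) : Prop :=
  ∀ i, (G.bnd i).isLeft = (H.bnd i).isLeft

/-- The map sending a vertex of `H` to the corresponding vertex of `G ⊕ H`. -/
noncomputable def glueMapV {t : ℕ} (G H : BHyp t) (hgl : Gluable G H) (v : H.V) :
    G.V ⊕ {v : H.V // ∀ i, H.bnd i ≠ Sum.inl v} :=
  open Classical in
  if h : ∃ i, H.bnd i = Sum.inl v then
    Sum.inl ((G.bnd h.choose).getLeft (by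
      have h1 := hgl h.choose
      rw [h.choose_spec] at h1
      simpa using h1))
  else Sum.inr ⟨v, fun i hi => h ⟨i, hi⟩⟩

/-- The map sending a hyperedge of `H` to the corresponding hyperedge of `G ⊕ H`. -/
noncomputable def glueMapE {t : ℕ} (G H : BHyp t) (hgl : Gluable G H) (e : H.E) :
    G.E ⊕ {e : H.E // ∀ i, H.bnd i ≠ Sum.inr e} :=
  open Classical in
  if h : ∃ i, H.bnd i = Sum.inr e then
    Sum.inl ((G.bnd h.choose).getRight (by
      have h1 := hgl h.choose
      rw [h.choose_spec] at h1
      cases hgb : G.bnd h.choose with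
      | inl a => rw [hgb] at h1; simp at h1
      | inr b => simp))
  else Sum.inr ⟨e, fun i hi => h ⟨i, hi⟩⟩

/-- Gluing of two gluable `t`-boundaried hypergraphs: disjoint union,
identifying equally labeled boundary vertices and replacing equally labeled
boundary hyperedges by their union. -/
noncomputable def glueHyp {t : ℕ} (G H : BHyp t) (hgl : Gluable G H) : BHyp t where
  V := G.V ⊕ {v : H.V // ∀ i, H.bnd i ≠ Sum.inl v}
  E := G.E ⊕ {e : H.E // ∀ i, H.bnd i ≠ Sum.inr e}
  mem := fun x y =>
    (∃ v e, x = Sum.inl v ∧ y = Sum.inl e ∧ G.mem v e) ∨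
    (∃ v e, H.mem v e ∧ x = glueMapV G H hgl v ∧ y = glueMapE G H hgl e)
  bnd := fun i => (G.bnd i).map Sum.inl Sum.inl

/-- A label-preserving isomorphism of `t`-boundaried hypergraphs. -/
structure BHypIso {t : ℕ} (G H : BHyp t) where
  eV : G.V ≃ H.V
  eE : G.E ≃ H.E
  mem_iff : ∀ v e, G.mem v e ↔ H.mem (eV v) (eE e)
  bnd_eq : ∀ i, H.bnd i = (G.bnd i).map eV eE
/-- A `t`-boundaried graph colored with two colors (`false` for vertex-side,
`true` for hyperedge-side) is bipartite if both color classes are independent. -/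
def Bipartite2 {t : ℕ} (G : BGraph t Bool) : Prop :=
  ∀ u v, G.graph.Adj u v → G.color u ≠ G.color v

/-- The `t`-boundaried hypergraph represented by a 2-colored `t`-boundaried
(incidence) graph: vertices are the color-`false` vertices, hyperedges are the
neighborhoods of the color-`true` vertices; boundary labels are inherited. -/
noncomputable def hyperg {t : ℕ} (G : BGraph t Bool) : BHyp t where
  V := {v : G.V // G.color v = false}
  E := {w : G.V // G.color w = true}
  mem := fun v w => G.graph.Adj v.1 w.1
  bnd := fun i =>
    if h : G.color (G.bnd i) = false then Sum.inl ⟨G.bnd i, h⟩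
    else Sum.inr ⟨G.bnd i, by revert h; cases G.color (G.bnd i) <;> simp⟩

theorem hyperg_bnd_inl {t : ℕ} (G : BGraph t Bool) (i : Fin t) (v : (hyperg G).V) :
    (hyperg G).bnd i = Sum.inl v ↔ G.bnd i = v.1 := by
  obtain ⟨v, hv⟩ := v
  show (dite _ _ _ : _ ⊕ _) = _ ↔ _
  split_ifs with h
  · constructor
    · intro h'
      exact congrArg Subtype.val (Sum.inl.inj h')
    · intro h'
      exact congrArg Sum.inl (Subtype.ext h')
  · constructor
    · intro h'
      cases h'
    · intro h'
      exact absurd (h' ▸ hv) h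

theorem hyperg_bnd_inr {t : ℕ} (G : BGraph t Bool) (i : Fin t) (v : (hyperg G).E) :
    (hyperg G).bnd i = Sum.inr v ↔ G.bnd i = v.1 := by
  obtain ⟨v, hv⟩ := v
  show (dite _ _ _ : _ ⊕ _) = _ ↔ _
  split_ifs with h
  · constructor
    · intro h'
      cases h'
    · intro h'
      have h' : G.bnd i = v := h'
      rw [h', hv] at h
      cases h
  · constructor
    · intro h'
      exact congrArg Subtype.val (Sum.inr.inj h')
    · intro h'
      exact congrArg Sum.inr (Subtype.ext h')

/-- Vertices of the glued hypergraph as vertices of the glued graph. -/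
def fV {t : ℕ} (G H : BGraph t Bool) (hgl : Gluable (hyperg G) (hyperg H)) :
    (glueHyp (hyperg G) (hyperg H) hgl).V → (hyperg (glueGraph G H)).V
  | Sum.inl v => ⟨Sum.inl v.1, v.2⟩
  | Sum.inr w => ⟨Sum.inr ⟨w.1.1, fun ⟨i, hi⟩ => w.2 i ((hyperg_bnd_inl H i w.1).2 hi)⟩, w.1.2⟩

/-- Hyperedges of the glued hypergraph as vertices of the glued graph. -/
def fE {t : ℕ} (G H : BGraph t Bool) (hgl : Gluable (hyperg G) (hyperg H)) :
    (glueHyp (hyperg G) (hyperg H) hgl).E → (hyperg (glueGraph G H)).E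
  | Sum.inl v => ⟨Sum.inl v.1, v.2⟩
  | Sum.inr w => ⟨Sum.inr ⟨w.1.1, fun ⟨i, hi⟩ => w.2 i ((hyperg_bnd_inr H i w.1).2 hi)⟩, w.1.2⟩

/-- The inverse of `fV`. -/
def gV {t : ℕ} (G H : BGraph t Bool) (hgl : Gluable (hyperg G) (hyperg H)) :
    (hyperg (glueGraph G H)).V → (glueHyp (hyperg G) (hyperg H) hgl).V
  | ⟨Sum.inl v, h⟩ => Sum.inl ⟨v, h⟩
  | ⟨Sum.inr w, h⟩ => Sum.inr ⟨⟨w.1, h⟩, fun i hi => w.2 ⟨i, (hyperg_bnd_inl H i ⟨w.1, h⟩).1 hi⟩⟩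

/-- The inverse of `fE`. -/
def gE {t : ℕ} (G H : BGraph t Bool) (hgl : Gluable (hyperg G) (hyperg H)) :
    (hyperg (glueGraph G H)).E → (glueHyp (hyperg G) (hyperg H) hgl).E
  | ⟨Sum.inl v, h⟩ => Sum.inl ⟨v, h⟩
  | ⟨Sum.inr w, h⟩ => Sum.inr ⟨⟨w.1, h⟩, fun i hi => w.2 ⟨i, (hyperg_bnd_inr H i ⟨w.1, h⟩).1 hi⟩⟩

/-- The vertex bijection. -/
def equivV {t : ℕ} (G H : BGraph t Bool) (hgl : Gluable (hyperg G) (hyperg H)) :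
    (hyperg (glueGraph G H)).V ≃ (glueHyp (hyperg G) (hyperg H) hgl).V where
  toFun := gV G H hgl
  invFun := fV G H hgl
  left_inv := by rintro ⟨v | w, h⟩ <;> rfl
  right_inv := by rintro (v | w) <;> rfl

/-- The hyperedge bijection. -/
def equivE {t : ℕ} (G H : BGraph t Bool) (hgl : Gluable (hyperg G) (hyperg H)) :
    (hyperg (glueGraph G H)).E ≃ (glueHyp (hyperg G) (hyperg H) hgl).E where
  toFun := gE G H hgl
  invFun := fE G H hgl
  left_inv := by rintro ⟨v | w, h⟩ <;> rfl
  right_inv := by rintro (v | w) <;> rfl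

theorem fV_glueMapV {t : ℕ} (G H : BGraph t Bool) (hgl : Gluable (hyperg G) (hyperg H))
    (v : (hyperg H).V) :
    (fV G H hgl (glueMapV (hyperg G) (hyperg H) hgl v)).1 = glueMap G H v.1 := by
  have hp : (fun i => (hyperg H).bnd i = Sum.inl v) = (fun i => H.bnd i = v.1) :=
    funext fun i => propext (hyperg_bnd_inl H i v)
  by_cases h : ∃ i, (hyperg H).bnd i = Sum.inl v
  · have h2 : ∃ i, H.bnd i = v.1 := hp ▸ h
    have hc : h.choose = h2.choose := by
      congr 1
    unfold glueMapV glueMap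
    rw [dif_pos h, dif_pos h2]
    refine congrArg Sum.inl ?_
    rw [← hc]
    exact ((hyperg_bnd_inl G h.choose _).1 (Sum.inl_getLeft _ _).symm).symm
  · have h2 : ¬ ∃ i, H.bnd i = v.1 := hp ▸ h
    unfold glueMapV glueMap
    rw [dif_neg h, dif_neg h2]
    rfl

theorem fE_glueMapE {t : ℕ} (G H : BGraph t Bool) (hgl : Gluable (hyperg G) (hyperg H))
    (v : (hyperg H).E) :
    (fE G H hgl (glueMapE (hyperg G) (hyperg H) hgl v)).1 = glueMap G H v.1 := by
  have hp : (fun i => (hyperg H).bnd i = Sum.inr v) = (fun i => H.bnd i = v.1) :=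
    funext fun i => propext (hyperg_bnd_inr H i v)
  by_cases h : ∃ i, (hyperg H).bnd i = Sum.inr v
  · have h2 : ∃ i, H.bnd i = v.1 := hp ▸ h
    have hc : h.choose = h2.choose := by
      congr 1
    unfold glueMapE glueMap
    rw [dif_pos h, dif_pos h2]
    refine congrArg Sum.inl ?_
    rw [← hc]
    exact ((hyperg_bnd_inr G h.choose _).1 (Sum.inr_getRight _ _).symm).symm
  · have h2 : ¬ ∃ i, H.bnd i = v.1 := hp ▸ h
    unfold glueMapE glueMap
    rw [dif_neg h, dif_neg h2]
    rfl

theorem glueMap_color {t : ℕ} (G H : BGraph t Bool) (hcc : ColorCompat G H) (v : H.V) :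
    (glueGraph G H).color (glueMap G H v) = H.color v := by
  unfold glueMap
  split_ifs with h
  · exact (hcc h.choose).trans (congrArg H.color h.choose_spec)
  · rfl

theorem glue_adj {t : ℕ} (G H : BGraph t Bool) (x y : (glueGraph G H).V) (hne : x ≠ y) :
    (glueGraph G H).graph.Adj x y ↔
    ((∃ u v, x = Sum.inl u ∧ y = Sum.inl v ∧ G.graph.Adj u v) ∨
    (∃ u v, x = glueMap G H u ∧ y = glueMap G H v ∧ H.graph.Adj u v)) := by
  refine (SimpleGraph.fromRel_adj _ x y).trans ?_
  constructor
  · rintro ⟨-, h | ⟨u, v, hu, hv, h⟩ | ⟨u, v, hu, hv, h⟩⟩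
    · exact h
    · exact Or.inl ⟨v, u, hv, hu, h.symm⟩
    · exact Or.inr ⟨v, u, hv, hu, h.symm⟩
  · intro h
    exact ⟨hne, Or.inl h⟩

theorem mem_iff_aux {t : ℕ} (G H : BGraph t Bool) (hcc : ColorCompat G H)
    (hgl : Gluable (hyperg G) (hyperg H))
    (v : (hyperg (glueGraph G H)).V) (e : (hyperg (glueGraph G H)).E) :
    (hyperg (glueGraph G H)).mem v e ↔
      (glueHyp (hyperg G) (hyperg H) hgl).mem (equivV G H hgl v) (equivE G H hgl e) := by
  have hne : v.1 ≠ e.1 := by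
    intro h
    have h1 := v.2
    rw [h, e.2] at h1
    cases h1
  refine (glue_adj G H v.1 e.1 hne).trans (or_congr ?_ ?_)
  · constructor
    · rintro ⟨a, b, ha, hb, h⟩
      obtain ⟨v, hv⟩ := v
      obtain ⟨e, he⟩ := e
      dsimp only at ha hb
      subst ha hb
      exact ⟨⟨a, hv⟩, ⟨b, he⟩, rfl, rfl, h⟩
    · rintro ⟨a, b, ha, hb, h⟩
      have ha' := (Equiv.apply_eq_iff_eq_symm_apply _).1 ha
      have hb' := (Equiv.apply_eq_iff_eq_symm_apply _).1 hb
      exact ⟨a.1, b.1, congrArg Subtype.val ha', congrArg Subtype.val hb', h⟩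
  · constructor
    · rintro ⟨a, b, ha, hb, h⟩
      have ca : H.color a = false := by
        rw [← glueMap_color G H hcc, ← ha]; exact v.2
      have cb : H.color b = true := by
        rw [← glueMap_color G H hcc, ← hb]; exact e.2
      refine ⟨⟨a, ca⟩, ⟨b, cb⟩, h, ?_, ?_⟩
      · refine (Equiv.apply_eq_iff_eq_symm_apply _).2 (Subtype.ext ?_)
        exact ha.trans (fV_glueMapV G H hgl ⟨a, ca⟩).symm
      · refine (Equiv.apply_eq_iff_eq_symm_apply _).2 (Subtype.ext ?_)
        exact hb.trans (fE_glueMapE G H hgl ⟨b, cb⟩).symm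
    · rintro ⟨a, b, h, ha, hb⟩
      have ha' := (Equiv.apply_eq_iff_eq_symm_apply _).1 ha
      have hb' := (Equiv.apply_eq_iff_eq_symm_apply _).1 hb
      exact ⟨a.1, b.1, (congrArg Subtype.val ha').trans (fV_glueMapV G H hgl a),
        (congrArg Subtype.val hb').trans (fE_glueMapE G H hgl b), h⟩

theorem bnd_eq_aux {t : ℕ} (G H : BGraph t Bool) (hgl : Gluable (hyperg G) (hyperg H))
    (i : Fin t) :
    (glueHyp (hyperg G) (hyperg H) hgl).bnd i =
      ((hyperg (glueGraph G H)).bnd i).map (equivV G H hgl) (equivE G H hgl) := by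
  show ((hyperg G).bnd i).map Sum.inl Sum.inl = _
  rcases hb : (hyperg G).bnd i with v | e
  · have h := (hyperg_bnd_inl G i v).1 hb
    have h2 : (hyperg (glueGraph G H)).bnd i = Sum.inl ⟨Sum.inl v.1, v.2⟩ :=
      (hyperg_bnd_inl (glueGraph G H) i ⟨Sum.inl v.1, v.2⟩).2 (congrArg Sum.inl h)
    rw [h2]
    rfl
  · have h := (hyperg_bnd_inr G i e).1 hb
    have h2 : (hyperg (glueGraph G H)).bnd i = Sum.inr ⟨Sum.inl e.1, e.2⟩ :=
      (hyperg_bnd_inr (glueGraph G H) i ⟨Sum.inl e.1, e.2⟩).2 (congrArg Sum.inl h)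
    rw [h2]
    rfl

/-- for gluable 2-colored `t`-boundaried bipartite incidence
graphs `G` and `H`, the hypergraph represented by the glued graph coincides
(via a label-preserving isomorphism) with the glued hypergraphs:
`H(G ⊕ H) = H(G) ⊕' H(H)`. -/
theorem hyperg_glue {t : ℕ} (G H : BGraph t Bool)
    (hG : Bipartite2 G) (hH : Bipartite2 H)
    (hcc : ColorCompat G H)
    (hgl : Gluable (hyperg G) (hyperg H)) :
    Nonempty (BHypIso (hyperg (glueGraph G H)) (glueHyp (hyperg G) (hyperg H) hgl)) := by
  exact ⟨⟨equivV G H hgl, equivE G H hgl, mem_iff_aux G H hcc hgl, bnd_eq_aux G H hgl⟩⟩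
end

section
/- If two t-boundaried hypergraphs G₁ and G₂ pass exactly the same set of cutwidth-k tests, then for every t-boundaried hypergraph H, the glued hypergraph G₁ ⊕ H has cutwidth at most k if and only if G₂ ⊕ H has cutwidth at most k. -/
/-- The cut at position `i` of a linear layout `l` of a boundaried hypergraph. -/
def BHyp.cutAt {t : ℕ} (H : BHyp t) (l : H.V → ℝ) (i : ℝ) : Set H.E :=
  {e | ∃ v w, H.mem v e ∧ H.mem w e ∧ l v < i ∧ i < l w}

/-- A boundaried hypergraph has cutwidth at most `k`. -/
def BHyp.cutwidthAtMost {t : ℕ} (H : BHyp t) (k : ℕ) : Prop :=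
  ∃ l : H.V → ℝ, Function.Injective l ∧ ∀ i : ℝ, (H.cutAt l i).encard ≤ k

/-- A size-`n` test `(π, S, k)` for cutwidth `k`: a map `π` from the boundary
labels to the positions `{1,…,n}` (encoded as `Fin n`), a sequence
`S₀, …, S_n` of pairs `Sᵢ = (wᵢ, Eᵢ)` with `wᵢ ≤ k` and `Eᵢ ⊆ {1,…,t}`, where
each label occurs in a consecutive interval of the `Eᵢ`. -/
structure CwTest (t k : ℕ) where
  n : ℕ
  π : Fin t → Fin n
  w : ℕ → ℕ
  w_le : ∀ i ≤ n, w i ≤ k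
  Elab : ℕ → Set (Fin t)
  Elab_convex : ∀ ℓ p q r, p ≤ q → q ≤ r → ℓ ∈ Elab p → ℓ ∈ Elab r → ℓ ∈ Elab q
  Elab_bound : ∀ i, n < i → Elab i = ∅

/-- The positions of a hyperedge `e` with respect to a layout `f` and a test:
the images of its vertices, together with all integer positions `j` with
`ℓ ∈ Eⱼ` if `e` is the boundary hyperedge labeled `ℓ`. -/
def posSet {t k : ℕ} (G : BHyp t) (T : CwTest t k) (f : G.V → ℝ) (e : G.E) : Set ℝ :=
  {x | ∃ v, G.mem v e ∧ f v = x} ∪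
  {x | ∃ (ℓ : Fin t) (j : ℕ), G.bnd ℓ = Sum.inr e ∧ ℓ ∈ T.Elab j ∧ x = (j : ℝ)}

/-- The joint cut at `i`: the hyperedges having positions on both sides of `i`. -/
def jointCut {t k : ℕ} (G : BHyp t) (T : CwTest t k) (f : G.V → ℝ) (i : ℝ) : Set G.E :=
  {e | ∃ x y, x ∈ posSet G T f e ∧ y ∈ posSet G T f e ∧ x < i ∧ i < y}

/-- `G` passes the test `T`: some `T`-compatible layout (boundary vertices at
their prescribed integer positions, other vertices in the open unit intervals)
has joint cutwidth at most `k`. -/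
def Passes {t k : ℕ} (G : BHyp t) (T : CwTest t k) : Prop :=
  ∃ f : G.V → ℝ, Function.Injective f ∧
    (∀ ℓ v, G.bnd ℓ = Sum.inl v → f v = (T.π ℓ : ℝ) + 1) ∧
    (∀ v, (∀ ℓ, G.bnd ℓ ≠ Sum.inl v) →
      ∃ j : ℕ, j ≤ T.n ∧ (j : ℝ) < f v ∧ f v < (j : ℝ) + 1) ∧
    ∀ i : ℝ, 0 < i → i < (T.n : ℝ) + 1 → (¬ ∃ m : ℤ, i = (m : ℝ)) →
      (jointCut G T f i).encard + (T.w ⌊i⌋.toNat : ℕ∞) ≤ k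


/-! ### Abstract subdivision of a complete linear order -/

section Subdiv
set_option linter.unusedSectionVars false
variable {α : Type} [CompleteLinearOrder α]

/-- One admissible step of a subdivision. -/
def GStep (w N : α → ℕ) (x y : α) : Prop :=
  x < y ∧ (x ⋖ y ∨
    ((∀ c, x ≤ c → c ≤ y → w x ≤ w c ∧ w c ≤ w y) ∧ (∀ c, x < c → c ≤ y → N c = N y) ∧
      (N x = N y ∨ ∀ d, x < d → ∃ c, x < c ∧ c < d)) ∨
    ((∀ c, x ≤ c → c ≤ y → w y ≤ w c ∧ w c ≤ w x) ∧ (∀ c, x ≤ c → c < y → N c = N x) ∧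
      (N x = N y ∨ ∀ d, d < y → ∃ c, d < c ∧ c < y)))

def LscR (w : α → ℕ) : Prop :=
  ∀ c (S : Set α), S.Nonempty → sInf S = c → ∃ y ∈ S, ∀ d, c ≤ d → d ≤ y → w c ≤ w d

def LscL (w : α → ℕ) : Prop :=
  ∀ c (S : Set α), S.Nonempty → sSup S = c → ∃ y ∈ S, ∀ d, y ≤ d → d ≤ c → w c ≤ w d

theorem exists_argmax (w : α → ℕ) (k : ℕ) (hk : ∀ c, w c ≤ k) (S : Set α) (hS : S.Nonempty) :
    ∃ z ∈ S, ∀ c ∈ S, w c ≤ w z := by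
  obtain ⟨z, hz, hm⟩ := (WellFounded.has_min (measure (fun c => k - w c)).wf S hS)
  refine ⟨z, hz, fun c hc => ?_⟩
  have := hm c hc
  have h1 := hk c
  have h2 := hk z
  simp only [InvImage, WellFoundedRelation.rel] at this
  have := Nat.not_lt.mp this
  omega

theorem exists_argmin (w : α → ℕ) (S : Set α) (hS : S.Nonempty) :
    ∃ z ∈ S, ∀ c ∈ S, w z ≤ w c := by
  obtain ⟨z, hz, hm⟩ := (WellFounded.has_min (measure w).wf S hS)
  exact ⟨z, hz, fun c hc => Nat.not_lt.mp (hm c hc)⟩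

theorem gstep_up {w N : α → ℕ} (hN : Monotone N) {p q x y : α} (hpq : N p = N q)
    (hpx : p ≤ x) (hxy : x ≤ y) (hyq : y ≤ q)
    (h : ∀ c, x ≤ c → c ≤ y → w x ≤ w c ∧ w c ≤ w y) :
    Relation.ReflTransGen (GStep w N) x y := by
  rcases hxy.eq_or_lt with rfl | hlt
  · exact .refl
  have key : ∀ c, p ≤ c → c ≤ q → N c = N p := fun c h1 h2 =>
    le_antisymm (by rw [hpq]; exact hN h2) (hN h1)
  refine .single ⟨hlt, Or.inr (Or.inl ⟨h, fun c h1 h2 => ?_, Or.inl ?_⟩)⟩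
  · rw [key c (hpx.trans h1.le) (h2.trans hyq), key y (hpx.trans hxy) hyq]
  · rw [key x hpx (hxy.trans hyq), key y (hpx.trans hxy) hyq]

theorem gstep_down {w N : α → ℕ} (hN : Monotone N) {p q x y : α} (hpq : N p = N q)
    (hpx : p ≤ x) (hxy : x ≤ y) (hyq : y ≤ q)
    (h : ∀ c, x ≤ c → c ≤ y → w y ≤ w c ∧ w c ≤ w x) :
    Relation.ReflTransGen (GStep w N) x y := by
  rcases hxy.eq_or_lt with rfl | hlt
  · exact .refl
  have key : ∀ c, p ≤ c → c ≤ q → N c = N p := fun c h1 h2 =>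
    le_antisymm (by rw [hpq]; exact hN h2) (hN h1)
  refine .single ⟨hlt, Or.inr (Or.inr ⟨h, fun c h1 h2 => ?_, Or.inl ?_⟩)⟩
  · rw [key c (hpx.trans h1) (h2.le.trans hyq), key x hpx (hxy.trans hyq)]
  · rw [key x hpx (hxy.trans hyq), key y (hpx.trans hxy) hyq]

theorem covBy_of_sSup {p y : α} (hpy : p < y) (h : sSup {d | p ≤ d ∧ d < y} ≠ y) :
    p ≤ sSup {d | p ≤ d ∧ d < y} ∧ sSup {d | p ≤ d ∧ d < y} ⋖ y := by
  have h1 : p ≤ sSup {d | p ≤ d ∧ d < y} := le_sSup ⟨le_rfl, hpy⟩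
  have h2 : sSup {d | p ≤ d ∧ d < y} ≤ y := sSup_le fun d hd => hd.2.le
  refine ⟨h1, lt_of_le_of_ne h2 h, fun c hc1 hc2 => ?_⟩
  exact absurd (le_sSup (show c ∈ {d | p ≤ d ∧ d < y} from ⟨h1.trans hc1.le, hc2⟩)) (not_le.mpr hc1)

theorem covBy_of_sInf {y q : α} (hyq : y < q) (h : sInf {d | y < d ∧ d ≤ q} ≠ y) :
    sInf {d | y < d ∧ d ≤ q} ≤ q ∧ y ⋖ sInf {d | y < d ∧ d ≤ q} := by
  have h1 : sInf {d | y < d ∧ d ≤ q} ≤ q := sInf_le ⟨hyq, le_rfl⟩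
  have h2 : y ≤ sInf {d | y < d ∧ d ≤ q} := le_sInf fun d hd => hd.1.le
  refine ⟨h1, lt_of_le_of_ne h2 (Ne.symm h), fun c hc1 hc2 => ?_⟩
  exact absurd (sInf_le (show c ∈ {d | y < d ∧ d ≤ q} from ⟨hc1, hc2.le.trans h1⟩)) (not_le.mpr hc2)

theorem reach_const {w N : α → ℕ} (hN : Monotone N) (hR : LscR w) (hL : LscL w)
    (M : ℕ) : ∀ p q : α, p ≤ q → N p = N q → (∀ c, p ≤ c → c ≤ q → w c < M) →
      Relation.ReflTransGen (GStep w N) p q := by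
  induction M with
  | zero =>
    intro p q hpq _ h
    exact absurd (h p le_rfl hpq) (by omega)
  | succ M ih =>
    intro p q hpq hNpq h
    have key : ∀ c, p ≤ c → c ≤ q → N c = N p := fun c h1 h2 =>
      le_antisymm (by rw [hNpq]; exact hN h2) (hN h1)
    by_cases hne : ∃ c, p ≤ c ∧ c ≤ q ∧ w c = M
    swap
    · apply ih p q hpq hNpq
      intro c h1 h2
      have := h c h1 h2
      by_contra h3
      exact hne ⟨c, h1, h2, by omega⟩
    -- left part
    have left : ∃ y, p ≤ y ∧ y ≤ q ∧ w y = M ∧ Relation.ReflTransGen (GStep w N) p y := by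
      set S : Set α := {c | p ≤ c ∧ c ≤ q ∧ w c = M} with hS
      have hSn : S.Nonempty := hne
      have hps : p ≤ sInf S := le_sInf fun c hc => hc.1
      have hsq : sInf S ≤ q := by obtain ⟨c, hc⟩ := hSn; exact (sInf_le hc).trans hc.2.1
      have hbelow : ∀ c, p ≤ c → c < sInf S → w c < M := by
        intro c h1 h2
        have := h c h1 (h2.le.trans hsq)
        by_contra h3
        exact absurd (sInf_le (show c ∈ S from ⟨h1, h2.le.trans hsq, by omega⟩)) (not_le.mpr h2)
      by_cases hM : w (sInf S) = M
      · refine ⟨sInf S, hps, hsq, hM, ?_⟩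
        rcases hps.eq_or_lt with heq | hlt
        · rw [← heq]
        by_cases hsup : sSup {d | p ≤ d ∧ d < sInf S} = sInf S
        · obtain ⟨y, hy, hyy⟩ := hL _ {d | p ≤ d ∧ d < sInf S} ⟨p, le_rfl, hlt⟩ hsup
          have := hyy y le_rfl hy.2.le
          have := hbelow y hy.1 hy.2
          omega
        · obtain ⟨h1, h2⟩ := covBy_of_sSup hlt hsup
          refine .tail (ih p _ h1 ?_ ?_) ⟨h2.lt, Or.inl h2⟩
          · exact (key _ h1 (h2.lt.le.trans hsq)).symm
          · intro c hc1 hc2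
            exact hbelow c hc1 (hc2.trans_lt h2.lt)
      · obtain ⟨y, hy, hyy⟩ := hR _ _ hSn rfl
        refine ⟨y, hy.1, hy.2.1, hy.2.2, ?_⟩
        refine (ih p (sInf S) hps (key _ hps hsq).symm ?_).trans
          (gstep_up hN hNpq hps (sInf_le hy) hy.2.1 ?_)
        · intro c h1 h2
          rcases h2.eq_or_lt with rfl | h2
          · have := h _ hps hsq
            omega
          · exact hbelow c h1 h2
        · intro c h1 h2
          refine ⟨hyy c h1 h2, ?_⟩
          have := h c (hps.trans h1) (h2.trans hy.2.1)
          rw [hy.2.2]; omega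
    obtain ⟨y, hpy, hyq, hyM, hRy⟩ := left
    have right : ∃ z, y ≤ z ∧ z ≤ q ∧ w z = M ∧ Relation.ReflTransGen (GStep w N) z q := by
      set S : Set α := {c | y ≤ c ∧ c ≤ q ∧ w c = M} with hS
      have hSn : S.Nonempty := ⟨y, le_rfl, hyq, hyM⟩
      have hsq : sSup S ≤ q := sSup_le fun c hc => hc.2.1
      have hys : y ≤ sSup S := le_sSup ⟨le_rfl, hyq, hyM⟩
      have habove : ∀ c, c ≤ q → sSup S < c → w c < M := by
        intro c h1 h2
        have := h c (hpy.trans (hys.trans h2.le)) h1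
        by_contra h3
        exact absurd (le_sSup (show c ∈ S from ⟨hys.trans h2.le, h1, by omega⟩)) (not_le.mpr h2)
      by_cases hM : w (sSup S) = M
      · refine ⟨sSup S, hys, hsq, hM, ?_⟩
        rcases hsq.eq_or_lt with heq | hlt
        · rw [heq]
        by_cases hinf : sInf {d | sSup S < d ∧ d ≤ q} = sSup S
        · obtain ⟨z, hz, hzz⟩ := hR _ {d | sSup S < d ∧ d ≤ q} ⟨q, hlt, le_rfl⟩ hinf
          have := hzz z hz.1.le le_rfl
          have := habove z hz.2 hz.1
          omega
        · obtain ⟨h1, h2⟩ := covBy_of_sInf hlt hinf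
          refine .head ⟨h2.lt, Or.inl h2⟩ (ih _ q h1 ?_ ?_)
          · rw [key _ (hpy.trans (hys.trans h2.lt.le)) h1, hNpq]
          · intro c hc1 hc2
            exact habove c hc2 (h2.lt.trans_le hc1)
      · obtain ⟨z, hz, hzz⟩ := hL _ _ hSn rfl
        refine ⟨z, hz.1, hz.2.1, hz.2.2, ?_⟩
        refine (gstep_down hN hNpq (hpy.trans hz.1) (le_sSup hz) hsq ?_).trans
          (ih (sSup S) q hsq (by rw [key _ (hpy.trans hys) hsq, hNpq]) ?_)
        · intro c h1 h2
          refine ⟨hzz c h1 h2, ?_⟩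
          have := h c (hpy.trans (hz.1.trans h1)) (h2.trans hsq)
          rw [hz.2.2]; omega
        · intro c h1 h2
          rcases h1.eq_or_lt with rfl | h1
          · have := h _ (hpy.trans hys) hsq
            omega
          · exact habove c h2 h1
    obtain ⟨z, hyz, hzq, hzM, hRz⟩ := right
    obtain ⟨m, hm, hmm⟩ := exists_argmin w (Set.Icc y z) ⟨y, le_rfl, hyz⟩
    refine hRy.trans ((gstep_down hN hNpq hpy hm.1 (hm.2.trans hzq) ?_).trans
      ((gstep_up hN hNpq (hpy.trans hm.1) hm.2 hzq ?_).trans hRz))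
    · intro c h1 h2
      have := h c (hpy.trans h1) (h2.trans (hm.2.trans hzq))
      exact ⟨hmm c ⟨h1, h2.trans hm.2⟩, by omega⟩
    · intro c h1 h2
      have := h c (hpy.trans (hm.1.trans h1)) (h2.trans hzq)
      exact ⟨hmm c ⟨hm.1.trans h1, h2⟩, by omega⟩

theorem reach_all {w N : α → ℕ} (k : ℕ) (hk : ∀ c, w c ≤ k) (hN : Monotone N)
    (hR : LscR w) (hL : LscL w) (D : ℕ) : ∀ p q : α, p ≤ q → N q < N p + D →
      Relation.ReflTransGen (GStep w N) p q := by
  induction D with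
  | zero =>
    intro p q hpq h
    exact absurd (hN hpq) (by omega)
  | succ D ih =>
    intro p q hpq hD
    have const : ∀ a b : α, a ≤ b → N a = N b → Relation.ReflTransGen (GStep w N) a b :=
      fun a b hab h => reach_const hN hR hL (k + 1) a b hab h
        (fun c _ _ => Nat.lt_succ_of_le (hk c))
    by_cases hpqN : N p = N q
    · exact const p q hpq hpqN
    set S : Set α := {d | p ≤ d ∧ d ≤ q ∧ N d = N p} with hS
    have hpS : p ∈ S := ⟨le_rfl, hpq, rfl⟩
    have hps : p ≤ sSup S := le_sSup hpS
    have hsq : sSup S ≤ q := sSup_le fun d hd => hd.2.1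
    have hbelow : ∀ c, p ≤ c → c < sSup S → N c = N p := by
      intro c h1 h2
      obtain ⟨d, hd, hcd⟩ := lt_sSup_iff.mp h2
      exact le_antisymm (by rw [← hd.2.2]; exact hN hcd.le) (hN h1)
    have habove : ∀ c, c ≤ q → sSup S < c → N p < N c := by
      intro c h1 h2
      rcases (hN (hps.trans h2.le)).eq_or_lt with h3 | h3
      · exact absurd (le_sSup (show c ∈ S from ⟨hps.trans h2.le, h1, h3.symm⟩)) (not_le.mpr h2)
      · exact h3
    by_cases hs : N (sSup S) = N p
    · have hlt : sSup S < q := lt_of_le_of_ne hsq (by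
        intro h; rw [h] at hs; exact hpqN hs.symm)
      refine (const p _ hps hs.symm).trans ?_
      by_cases hinf : sInf {d | sSup S < d ∧ d ≤ q} = sSup S
      · obtain ⟨y, hy, hyy⟩ := hR _ {d | sSup S < d ∧ d ≤ q} ⟨q, hlt, le_rfl⟩ hinf
        have hlim : ∀ d, sSup S < d → ∃ c, sSup S < c ∧ c < d := by
          intro d hd
          rw [← hinf] at hd
          obtain ⟨c, hc, hcd⟩ := sInf_lt_iff.mp hd
          exact ⟨c, hc.1, hcd⟩
        obtain ⟨y', hy', hmin⟩ := exists_argmin N (Set.Ioc (sSup S) y) ⟨y, hy.1, le_rfl⟩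
        obtain ⟨z, hz, hzm⟩ := exists_argmax w k hk (Set.Ioc (sSup S) y') ⟨y', hy'.1, le_rfl⟩
        have hzq : z ≤ q := hz.2.trans (hy'.2.trans hy.2)
        have hNc : ∀ c, sSup S < c → c ≤ y' → N c = N y' := fun c h1 h2 =>
          le_antisymm (hN h2) (hmin c ⟨h1, h2.trans hy'.2⟩)
        refine .head (b := z) ⟨hz.1, Or.inr (Or.inl ⟨?_, ?_, Or.inr hlim⟩)⟩ (ih z q hzq ?_)
        · intro c h1 h2
          refine ⟨hyy c h1 (h2.trans (hz.2.trans hy'.2)), ?_⟩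
          rcases h1.eq_or_lt with rfl | h1
          · exact hyy z hz.1.le (hz.2.trans hy'.2)
          · exact hzm c ⟨h1, h2.trans hz.2⟩
        · intro c h1 h2
          rw [hNc c h1 (h2.trans hz.2), hNc z hz.1 hz.2]
        · have := habove z hzq hz.1
          omega
      · obtain ⟨h1, h2⟩ := covBy_of_sInf hlt hinf
        refine .head ⟨h2.lt, Or.inl h2⟩ (ih _ q h1 ?_)
        have := habove _ h1 h2.lt
        omega
    · have hlt : p < sSup S := lt_of_le_of_ne hps (by
        intro h; rw [← h] at hs; exact hs rfl)
      have hSlt : ∀ d ∈ S, d < sSup S := fun d hd => lt_of_le_of_ne (le_sSup hd) (by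
        intro h; rw [← h] at hs; exact hs hd.2.2)
      obtain ⟨y, hy, hyy⟩ := hL _ _ ⟨p, hpS⟩ (rfl : sSup S = sSup S)
      have hlim : ∀ d, d < sSup S → ∃ c, d < c ∧ c < sSup S := by
        intro d hd
        obtain ⟨c, hc, hcd⟩ := lt_sSup_iff.mp hd
        exact ⟨c, hcd, hSlt c hc⟩
      obtain ⟨z, hz, hzm⟩ := exists_argmax w k hk (Set.Ico y (sSup S)) ⟨y, le_rfl, hSlt y hy⟩
      have hpz : p ≤ z := hy.1.trans hz.1
      refine (const p z hpz (hbelow z hpz hz.2).symm).trans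
        (.head (b := sSup S) ⟨hz.2, Or.inr (Or.inr ⟨?_, ?_, Or.inr hlim⟩)⟩ (ih _ q hsq ?_))
      · intro c h1 h2
        refine ⟨hyy c (hz.1.trans h1) h2, ?_⟩
        rcases h2.eq_or_lt with rfl | h2
        · exact hyy z hz.1 hz.2.le
        · exact hzm c ⟨hz.1.trans h1, h2⟩
      · intro c h1 h2
        rw [hbelow c (hpz.trans h1) h2, hbelow z hpz hz.2]
      · have := hN hps
        omega

theorem chain_of_reach {r : α → α → Prop} {a b : α} (h : Relation.ReflTransGen r a b) :
    ∃ (n : ℕ) (x : ℕ → α), x 0 = a ∧ x n = b ∧ ∀ i < n, r (x i) (x (i + 1)) := by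
  induction h with
  | refl => exact ⟨0, fun _ => a, rfl, rfl, fun i hi => absurd hi (by omega)⟩
  | @tail b c _ hbc ih =>
    obtain ⟨n, x, h0, hn, hx⟩ := ih
    refine ⟨n + 1, fun i => if i ≤ n then x i else c, by simp [h0], by simp, fun i hi => ?_⟩
    by_cases h : i < n
    · have h1 : i ≤ n := h.le
      have h2 : i + 1 ≤ n := h
      simp only [h1, h2, if_true]
      exact hx i h
    · have : i = n := by omega
      subst this
      simp [hn, hbc]

end Subdiv

/-! ### Signatures of cuts -/

section Sig
variable {t : ℕ} {K : Type}

/-- Objects with positions on both sides of the cut `c`. -/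
def HC (pos : K → Set ℝ) (c : LowerSet ℝ) : Set K :=
  {e | (∃ p ∈ pos e, p ∈ c) ∧ ∃ p ∈ pos e, p ∉ c}

noncomputable def wt (pos : K → Set ℝ) (c : LowerSet ℝ) : ℕ := (HC pos c).ncard

structure SigLe (pos : K → Set ℝ) (P : Fin t → Set ℝ) (c d : LowerSet ℝ) : Prop where
  wle : wt pos c ≤ wt pos d
  A : ∀ ℓ, (∃ p ∈ P ℓ, p ∈ c) → ∃ p ∈ P ℓ, p ∈ d
  B : ∀ ℓ, (∃ p ∈ P ℓ, p ∉ c) → ∃ p ∈ P ℓ, p ∉ d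

theorem SigLe.rfl' (pos : K → Set ℝ) (P : Fin t → Set ℝ) (c : LowerSet ℝ) : SigLe pos P c c :=
  ⟨le_rfl, fun _ h => h, fun _ h => h⟩

/-- Steps where the signature of `x` is smallest. -/
def StepUp (pos : K → Set ℝ) (P Bd : Fin t → Set ℝ) (x y : LowerSet ℝ) : Prop :=
  (∀ ℓ, ∀ r ∈ Bd ℓ, r ∈ y → r ∈ x) ∧ ∀ c, x ≤ c → c ≤ y → SigLe pos P x c ∧ SigLe pos P c y

/-- Steps where the signature of `y` is smallest. -/
def StepDown (pos : K → Set ℝ) (P Bd : Fin t → Set ℝ) (x y : LowerSet ℝ) : Prop :=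
  (∀ ℓ, ∀ r ∈ Bd ℓ, r ∈ y → r ∈ x) ∧ ∀ c, x ≤ c → c ≤ y → SigLe pos P y c ∧ SigLe pos P c x

theorem fin_avoid {S : Set (LowerSet ℝ)} (hS : S.Nonempty) {F : Set K} (hF : F.Finite)
    (b : K → ℝ) (hb : ∀ e ∈ F, b e ∉ sInf S) : ∃ y ∈ S, ∀ e ∈ F, b e ∉ y := by
  induction F, hF using Set.Finite.induction_on with
  | empty => obtain ⟨y, hy⟩ := hS; exact ⟨y, hy, by simp⟩
  | @insert a F _ _ ih =>
    obtain ⟨y, hy, hyF⟩ := ih fun e he => hb e (Set.mem_insert_of_mem _ he)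
    have h1 := hb a (Set.mem_insert _ _)
    rw [LowerSet.mem_sInf_iff] at h1
    push Not at h1
    obtain ⟨z, hz, hza⟩ := h1
    rcases le_total y z with h | h
    · refine ⟨y, hy, ?_⟩
      rintro e (rfl | he)
      · exact fun h' => hza (h h')
      · exact hyF e he
    · refine ⟨z, hz, ?_⟩
      rintro e (rfl | he)
      · exact hza
      · exact fun h' => hyF e he (h h')

theorem fin_catch {S : Set (LowerSet ℝ)} (hS : S.Nonempty) {F : Set K} (hF : F.Finite)
    (b : K → ℝ) (hb : ∀ e ∈ F, b e ∈ sSup S) : ∃ y ∈ S, ∀ e ∈ F, b e ∈ y := by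
  induction F, hF using Set.Finite.induction_on with
  | empty => obtain ⟨y, hy⟩ := hS; exact ⟨y, hy, by simp⟩
  | @insert a F _ _ ih =>
    obtain ⟨y, hy, hyF⟩ := ih fun e he => hb e (Set.mem_insert_of_mem _ he)
    have h1 := hb a (Set.mem_insert _ _)
    rw [LowerSet.mem_sSup_iff] at h1
    obtain ⟨z, hz, hza⟩ := h1
    rcases le_total y z with h | h
    · refine ⟨z, hz, ?_⟩
      rintro e (rfl | he)
      · exact hza
      · exact h (hyF e he)
    · refine ⟨y, hy, ?_⟩
      rintro e (rfl | he)
      · exact h hza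
      · exact hyF e he

theorem HC_finite {pos : K → Set ℝ} {k : ℕ} (hk : ∀ c, (HC pos c).encard ≤ k) (c : LowerSet ℝ) :
    (HC pos c).Finite := Set.finite_of_encard_le_coe (hk c)

theorem wt_cast {pos : K → Set ℝ} {k : ℕ} (hk : ∀ c, (HC pos c).encard ≤ k) (c : LowerSet ℝ) :
    (wt pos c : ℕ∞) = (HC pos c).encard := (HC_finite hk c).cast_ncard_eq

theorem wt_le {pos : K → Set ℝ} {k : ℕ} (hk : ∀ c, (HC pos c).encard ≤ k) (c : LowerSet ℝ) :
    wt pos c ≤ k := by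
  have := hk c
  rw [← wt_cast hk] at this
  exact_mod_cast this

theorem lscR_wt {pos : K → Set ℝ} {k : ℕ} (hk : ∀ c, (HC pos c).encard ≤ k) :
    LscR (wt pos) := by
  intro c S hS hc
  have h : ∀ e, ∃ b : ℝ, e ∈ HC pos c → b ∈ pos e ∧ b ∉ c := by
    intro e
    by_cases he : e ∈ HC pos c
    · obtain ⟨p, hp⟩ := he.2
      exact ⟨p, fun _ => hp⟩
    · exact ⟨0, fun h => absurd h he⟩
  choose b hb using h
  obtain ⟨y, hy, hyb⟩ := fin_avoid hS (HC_finite hk c) b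
    (fun e he => by rw [hc]; exact (hb e he).2)
  refine ⟨y, hy, fun d h1 h2 => Set.ncard_le_ncard ?_ (HC_finite hk d)⟩
  intro e he
  obtain ⟨p, hp, hpc⟩ := he.1
  exact ⟨⟨p, hp, h1 hpc⟩, b e, (hb e he).1, fun h => hyb e he (h2 h)⟩

theorem lscL_wt {pos : K → Set ℝ} {k : ℕ} (hk : ∀ c, (HC pos c).encard ≤ k) :
    LscL (wt pos) := by
  intro c S hS hc
  have h : ∀ e, ∃ b : ℝ, e ∈ HC pos c → b ∈ pos e ∧ b ∈ c := by
    intro e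
    by_cases he : e ∈ HC pos c
    · obtain ⟨p, hp⟩ := he.1
      exact ⟨p, fun _ => hp⟩
    · exact ⟨0, fun h => absurd h he⟩
  choose b hb using h
  obtain ⟨y, hy, hyb⟩ := fin_catch hS (HC_finite hk c) b
    (fun e he => by rw [hc]; exact (hb e he).2)
  refine ⟨y, hy, fun d h1 h2 => Set.ncard_le_ncard ?_ (HC_finite hk d)⟩
  intro e he
  obtain ⟨p, hp, hpc⟩ := he.2
  exact ⟨⟨b e, (hb e he).1, h1 (hyb e he)⟩, p, hp, fun h => hpc (h2 h)⟩

/-- The monotone predicates that have to be locally constant. -/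
def Q (P Bd : Fin t → Set ℝ) (c : LowerSet ℝ) : Set (Fin t ⊕ Fin t ⊕ Fin t) :=
  {s | match s with
    | .inl ℓ => ∃ p ∈ P ℓ, p ∈ c
    | .inr (.inl ℓ) => ∀ p ∈ P ℓ, p ∈ c
    | .inr (.inr ℓ) => ∃ p ∈ Bd ℓ, p ∈ c}

theorem Q_mono (P Bd : Fin t → Set ℝ) : Monotone (Q P Bd) := by
  intro c d h s hs
  match s with
  | .inl ℓ => obtain ⟨p, hp, hpc⟩ := hs; exact ⟨p, hp, h hpc⟩
  | .inr (.inl ℓ) => exact fun p hp => h (hs p hp)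
  | .inr (.inr ℓ) => obtain ⟨p, hp, hpc⟩ := hs; exact ⟨p, hp, h hpc⟩

noncomputable def NQ (P Bd : Fin t → Set ℝ) (c : LowerSet ℝ) : ℕ := (Q P Bd c).ncard

theorem NQ_mono (P Bd : Fin t → Set ℝ) : Monotone (NQ P Bd) := fun _ _ h =>
  Set.ncard_le_ncard (Q_mono P Bd h) (Set.toFinite _)

theorem Q_eq {P Bd : Fin t → Set ℝ} {c d : LowerSet ℝ} (h : c ≤ d) (hN : NQ P Bd c = NQ P Bd d) :
    Q P Bd c = Q P Bd d :=
  Set.eq_of_subset_of_ncard_le (Q_mono P Bd h) hN.ge (Set.toFinite _)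

theorem subdiv (pos : K → Set ℝ) (P Bd : Fin t → Set ℝ) (hBd : ∀ ℓ, (Bd ℓ).Subsingleton) (k : ℕ)
    (hk : ∀ c, (HC pos c).encard ≤ k) :
    ∃ (n : ℕ) (x : ℕ → LowerSet ℝ), x 0 = ⊥ ∧ x n = ⊤ ∧ ∀ i < n, x i < x (i + 1) ∧
      (x i ⋖ x (i + 1) ∨ StepUp pos P Bd (x i) (x (i + 1)) ∨
        StepDown pos P Bd (x i) (x (i + 1))) := by
  obtain ⟨n, x, h0, hn, hx⟩ := chain_of_reach (reach_all k (wt_le hk) (NQ_mono P Bd)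
    (lscR_wt hk) (lscL_wt hk) (NQ P Bd ⊤ + 1) ⊥ ⊤ bot_le (by omega))
  refine ⟨n, x, h0, hn, fun i hi => ?_⟩
  obtain ⟨hlt, hcov | ⟨hw, hN, hlim⟩ | ⟨hw, hN, hlim⟩⟩ := hx i hi
  · exact ⟨hlt, Or.inl hcov⟩
  · refine ⟨hlt, Or.inr (Or.inl ?_)⟩
    generalize x i = a at *
    generalize x (i + 1) = b at *
    have hQ : ∀ c, a < c → c ≤ b → Q P Bd c = Q P Bd b := fun c h1 h2 => Q_eq h2 (hN c h1 h2)
    -- every point outside `a` is avoided by some cut with the signature of `b`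
    have hav : ∀ r, r ∉ a → (Q P Bd a = Q P Bd b) ∨ ∃ c, a < c ∧ c ≤ b ∧ r ∉ c := by
      intro r hr
      rcases hlim with h | h
      · exact Or.inl (Q_eq hlt.le h)
      right
      by_cases hrb : r ∈ b
      · have : a < LowerSet.Iic r := by
          refine lt_of_le_of_ne (fun s hs => ?_) (fun h => hr (h ▸ LowerSet.mem_Iic_iff.mpr le_rfl))
          by_contra h'
          exact hr (a.lower (not_le.mp h').le hs)
        obtain ⟨c, hc1, hc2⟩ := h _ this
        refine ⟨c, hc1, hc2.le.trans (LowerSet.Iic_le.mpr hrb), fun hrc => ?_⟩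
        exact absurd (LowerSet.Iic_le.mpr hrc) (not_le.mpr hc2)
      · exact ⟨b, hlt, le_rfl, hrb⟩
    refine ⟨fun ℓ r hr hrb => ?_, fun c h1 h2 => ⟨⟨(hw c h1 h2).1, ?_, ?_⟩, ⟨(hw c h1 h2).2, ?_, ?_⟩⟩⟩
    · by_contra hra
      have hb : (.inr (.inr ℓ)) ∈ Q P Bd b := ⟨r, hr, hrb⟩
      rcases hav r hra with h | ⟨c, hc1, hc2, hrc⟩
      · rw [← h] at hb
        obtain ⟨s, hs, hsa⟩ := hb
        exact hra (hBd ℓ hs hr ▸ hsa)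
      · rw [← hQ c hc1 hc2] at hb
        obtain ⟨s, hs, hsa⟩ := hb
        exact hrc (hBd ℓ hs hr ▸ hsa)
    · rintro ℓ ⟨p, hp, hpc⟩
      exact ⟨p, hp, h1 hpc⟩
    · rintro ℓ ⟨p, hp, hpc⟩
      by_contra hcon
      push Not at hcon
      have hb : (.inr (.inl ℓ)) ∈ Q P Bd b := fun p hp => h2 (hcon p hp)
      rcases hav p hpc with h | ⟨c', hc1, hc2, hrc⟩
      · rw [← h] at hb
        exact hpc (hb p hp)
      · rw [← hQ c' hc1 hc2] at hb
        exact hrc (hb p hp)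
    · rintro ℓ ⟨p, hp, hpc⟩
      exact ⟨p, hp, h2 hpc⟩
    · rintro ℓ ⟨p, hp, hpc⟩
      by_contra hcon
      push Not at hcon
      have hb : (.inr (.inl ℓ)) ∈ Q P Bd b := fun p hp => (hcon p hp)
      rcases h1.eq_or_lt with rfl | h1
      · rcases hav p hpc with h | ⟨c', hc1, hc2, hrc⟩
        · rw [← h] at hb
          exact hpc (hb p hp)
        · rw [← hQ c' hc1 hc2] at hb
          exact hrc (hb p hp)
      · rw [← hQ c h1 h2] at hb
        exact hpc (hb p hp)
  · refine ⟨hlt, Or.inr (Or.inr ?_)⟩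
    generalize x i = a at *
    generalize x (i + 1) = b at *
    have hQ : ∀ c, a ≤ c → c < b → Q P Bd a = Q P Bd c := fun c h1 h2 =>
      Q_eq h1 (hN c h1 h2).symm
    have hav : ∀ r, r ∈ b → (Q P Bd a = Q P Bd b) ∨ ∃ c, a ≤ c ∧ c < b ∧ r ∈ c := by
      intro r hr
      rcases hlim with h | h
      · exact Or.inl (Q_eq hlt.le h)
      right
      by_cases hra : r ∈ a
      · exact ⟨a, le_rfl, hlt, hra⟩
      · have : LowerSet.Iio r < b := by
          refine lt_of_le_of_ne (fun s hs => ?_) (fun h => ?_)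
          · exact b.lower (LowerSet.mem_Iio_iff.mp hs).le hr
          · rw [← h] at hr
            exact lt_irrefl _ (LowerSet.mem_Iio_iff.mp hr)
        obtain ⟨c, hc1, hc2⟩ := h _ this
        have hrc : r ∈ c := by
          by_contra hrc
          refine absurd hc1 (not_lt.mpr fun s hs => ?_)
          refine LowerSet.mem_Iio_iff.mpr ?_
          by_contra h'
          exact hrc (c.lower (not_lt.mp h') hs)
        refine ⟨c, ?_, hc2, hrc⟩
        by_contra hac
        exact hra ((not_le.mp hac).le hrc)
    have hAB : ∀ ℓ, (∃ p ∈ P ℓ, p ∈ b) → ∃ p ∈ P ℓ, p ∈ a := by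
      rintro ℓ ⟨p, hp, hpb⟩
      rcases hav p hpb with h | ⟨c, hc1, hc2, hrc⟩
      · have hb : (.inl ℓ) ∈ Q P Bd b := ⟨p, hp, hpb⟩
        rw [← h] at hb
        exact hb
      · have hb : (.inl ℓ) ∈ Q P Bd c := ⟨p, hp, hrc⟩
        rw [← hQ c hc1 hc2] at hb
        exact hb
    refine ⟨fun ℓ r hr hrb => ?_, fun c h1 h2 => ⟨⟨(hw c h1 h2).1, ?_, ?_⟩, ⟨(hw c h1 h2).2, ?_, ?_⟩⟩⟩
    · rcases hav r hrb with h | ⟨c, hc1, hc2, hrc⟩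
      · have hb : (.inr (.inr ℓ)) ∈ Q P Bd b := ⟨r, hr, hrb⟩
        rw [← h] at hb
        obtain ⟨s, hs, hsa⟩ := hb
        exact (hBd ℓ hs hr ▸ hsa)
      · have hb : (.inr (.inr ℓ)) ∈ Q P Bd c := ⟨r, hr, hrc⟩
        rw [← hQ c hc1 hc2] at hb
        obtain ⟨s, hs, hsa⟩ := hb
        exact (hBd ℓ hs hr ▸ hsa)
    · intro ℓ h
      obtain ⟨p, hp, hpa⟩ := hAB ℓ h
      exact ⟨p, hp, h1 hpa⟩
    · rintro ℓ ⟨p, hp, hpc⟩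
      exact ⟨p, hp, fun h => hpc (h2 h)⟩
    · rintro ℓ ⟨p, hp, hpc⟩
      exact hAB ℓ ⟨p, hp, h2 hpc⟩
    · rintro ℓ ⟨p, hp, hpc⟩
      exact ⟨p, hp, fun h => hpc (h1 h)⟩

end Sig

/-! ### Glued hypergraphs -/

section Glue
variable {t : ℕ}

def chE (H : BHyp t) (e : H.E) (ℓ : Fin t) : Prop :=
  ∃ h : ∃ i, H.bnd i = Sum.inr e, h.choose = ℓ

def chV (H : BHyp t) (v : H.V) (ℓ : Fin t) : Prop :=
  ∃ h : ∃ i, H.bnd i = Sum.inl v, h.choose = ℓ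

theorem glueMapE_inl (G H : BHyp t) (hgl : Gluable G H) (e : H.E) (e' : G.E) :
    glueMapE G H hgl e = Sum.inl e' ↔ ∃ ℓ, chE H e ℓ ∧ G.bnd ℓ = Sum.inr e' := by
  unfold glueMapE chE
  by_cases h : ∃ i, H.bnd i = Sum.inr e
  · rw [dif_pos h]
    constructor
    · intro h1
      refine ⟨_, ⟨h, rfl⟩, ?_⟩
      rw [← Sum.inl.inj h1]
      simp
    · rintro ⟨ℓ, ⟨_, rfl⟩, h2⟩
      congr 1
      simp [h2]
  · rw [dif_neg h]
    constructor
    · intro h1; cases h1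
    · rintro ⟨ℓ, ⟨h', _⟩, _⟩; exact absurd h' h

theorem glueMapE_inr (G H : BHyp t) (hgl : Gluable G H) (e : H.E)
    (e' : {e : H.E // ∀ i, H.bnd i ≠ Sum.inr e}) :
    glueMapE G H hgl e = Sum.inr e' ↔ e = e'.1 := by
  unfold glueMapE
  by_cases h : ∃ i, H.bnd i = Sum.inr e
  · rw [dif_pos h]
    constructor
    · intro h1; cases h1
    · rintro rfl
      obtain ⟨i, hi⟩ := h
      exact absurd hi (e'.2 i)
  · rw [dif_neg h]
    constructor
    · intro h1; exact congrArg Subtype.val (Sum.inr.inj h1)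
    · rintro rfl; rfl

theorem glueMapV_inl (G H : BHyp t) (hgl : Gluable G H) (e : H.V) (e' : G.V) :
    glueMapV G H hgl e = Sum.inl e' ↔ ∃ ℓ, chV H e ℓ ∧ G.bnd ℓ = Sum.inl e' := by
  unfold glueMapV chV
  by_cases h : ∃ i, H.bnd i = Sum.inl e
  · rw [dif_pos h]
    constructor
    · intro h1
      refine ⟨_, ⟨h, rfl⟩, ?_⟩
      rw [← Sum.inl.inj h1]
      exact (Sum.inl_getLeft _ _).symm
    · rintro ⟨ℓ, ⟨_, rfl⟩, h2⟩
      congr 1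
      exact (Sum.getLeft_eq_iff _).mpr h2
  · rw [dif_neg h]
    constructor
    · intro h1; cases h1
    · rintro ⟨ℓ, ⟨h', _⟩, _⟩; exact absurd h' h

theorem glueMapV_inr (G H : BHyp t) (hgl : Gluable G H) (e : H.V)
    (e' : {v : H.V // ∀ i, H.bnd i ≠ Sum.inl v}) :
    glueMapV G H hgl e = Sum.inr e' ↔ e = e'.1 := by
  unfold glueMapV
  by_cases h : ∃ i, H.bnd i = Sum.inl e
  · rw [dif_pos h]
    constructor
    · intro h1; cases h1
    · rintro rfl
      obtain ⟨i, hi⟩ := h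
      exact absurd hi (e'.2 i)
  · rw [dif_neg h]
    constructor
    · intro h1; exact congrArg Subtype.val (Sum.inr.inj h1)
    · rintro rfl; rfl

/-- Positions contributed to the label `ℓ` by the `H`-side. -/
def PH (H : BHyp t) (h : H.V → ℝ) (ℓ : Fin t) : Set ℝ :=
  {r | ∃ v e, H.mem v e ∧ chE H e ℓ ∧ h v = r}

def posH (H : BHyp t) (h : H.V → ℝ) (e : {e : H.E // ∀ i, H.bnd i ≠ Sum.inr e}) : Set ℝ :=
  {r | ∃ v, H.mem v e.1 ∧ h v = r}

def gp (G : BHyp t) (g : G.V → ℝ) (P : Fin t → Set ℝ) (e : G.E) : Set ℝ :=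
  {r | (∃ v, G.mem v e ∧ g v = r) ∨ ∃ ℓ, G.bnd ℓ = Sum.inr e ∧ r ∈ P ℓ}

def lpos (G : BHyp t) (l : G.V → ℝ) (e : G.E) : Set ℝ := {r | ∃ v, G.mem v e ∧ l v = r}

theorem lpos_inl (G H : BHyp t) (hgl : Gluable G H) (l : (glueHyp G H hgl).V → ℝ) (e : G.E) :
    lpos (glueHyp G H hgl) l (Sum.inl e) =
      gp G (fun v => l (Sum.inl v)) (PH H (fun v => l (glueMapV G H hgl v))) e := by
  ext r
  constructor
  · rintro ⟨x, hx | hx, rfl⟩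
    · obtain ⟨v, e', rfl, he, hm⟩ := hx
      cases Sum.inl.inj he
      exact Or.inl ⟨v, hm, rfl⟩
    · obtain ⟨v, e', hm, rfl, he⟩ := hx
      obtain ⟨ℓ, h1, h2⟩ := (glueMapE_inl G H hgl e' e).mp he.symm
      exact Or.inr ⟨ℓ, h2, v, e', hm, h1, rfl⟩
  · rintro (⟨v, hm, rfl⟩ | ⟨ℓ, h2, v, e', hm, h1, rfl⟩)
    · exact ⟨Sum.inl v, Or.inl ⟨v, e, rfl, rfl, hm⟩, rfl⟩
    · exact ⟨glueMapV G H hgl v, Or.inr ⟨v, e', hm, rfl,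
        ((glueMapE_inl G H hgl e' e).mpr ⟨ℓ, h1, h2⟩).symm⟩, rfl⟩

theorem lpos_inr (G H : BHyp t) (hgl : Gluable G H) (l : (glueHyp G H hgl).V → ℝ)
    (e : {e : H.E // ∀ i, H.bnd i ≠ Sum.inr e}) :
    lpos (glueHyp G H hgl) l (Sum.inr e) = posH H (fun v => l (glueMapV G H hgl v)) e := by
  ext r
  constructor
  · rintro ⟨x, hx | hx, rfl⟩
    · obtain ⟨v, e', rfl, he, hm⟩ := hx
      cases he
    · obtain ⟨v, e', hm, rfl, he⟩ := hx
      have := (glueMapE_inr G H hgl e' e).mp he.symm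
      subst this
      exact ⟨v, hm, rfl⟩
  · rintro ⟨v, hm, rfl⟩
    exact ⟨glueMapV G H hgl v, Or.inr ⟨v, e.1, hm, rfl,
        ((glueMapE_inr G H hgl e.1 e).mpr rfl).symm⟩, rfl⟩

theorem encard_sum {A B : Type} (s : Set (A ⊕ B)) :
    s.encard = (Sum.inl ⁻¹' s).encard + (Sum.inr ⁻¹' s).encard := by
  rw [← Sum.inl_injective.encard_image (Sum.inl ⁻¹' s),
    ← Sum.inr_injective.encard_image (Sum.inr ⁻¹' s), ← Set.encard_union_eq]
  · congr 1
    ext x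
    rcases x with a | b <;> simp
  · rw [Set.disjoint_left]
    rintro _ ⟨a, _, rfl⟩ ⟨b, _, h⟩
    cases h

theorem encard_le_of_finite {A : Type} (s : Set A) (W k : ℕ)
    (h : ∀ F ⊆ s, F.Finite → F.encard + W ≤ k) : s.encard + W ≤ k := by
  by_cases hs : s.Finite
  · exact h s subset_rfl hs
  · have : ((k + 1 : ℕ) : ℕ∞) ≤ s.encard := by
      rw [Set.encard_eq_top_iff.mpr hs]; exact le_top
    obtain ⟨F, hF, hc⟩ := Set.exists_subset_encard_eq this
    have h1 := h F hF (Set.finite_of_encard_eq_coe hc)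
    rw [hc] at h1
    have : k + 1 + W ≤ k := by exact_mod_cast h1
    omega

/-- For finitely many reals below `b`, some bound `< b` lies above all of them. -/
theorem fin_lt {A : Type} {F : Set A} (hF : F.Finite) (a : A → ℝ) {b b' : ℝ} (hb : b' < b)
    (h : ∀ e ∈ F, a e < b) : ∃ y, b' < y ∧ y < b ∧ ∀ e ∈ F, a e < y := by
  induction F, hF using Set.Finite.induction_on with
  | empty => exact ⟨(b' + b) / 2, by linarith, by linarith, by simp⟩
  | @insert c F _ _ ih =>
    obtain ⟨y, h1, h2, h3⟩ := ih fun e he => h e (Set.mem_insert_of_mem _ he)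
    have h4 := h c (Set.mem_insert _ _)
    refine ⟨(max y (a c) + b) / 2, ?_, ?_, ?_⟩
    · have := le_max_left y (a c); linarith
    · have := max_lt h2 h4; linarith
    · have h5 := max_lt h2 h4
      rintro e (rfl | he)
      · have := le_max_right y (a e); linarith
      · have := h3 e he
        have := le_max_left y (a c); linarith

theorem fin_gt {A : Type} {F : Set A} (hF : F.Finite) (a : A → ℝ) {b b' : ℝ} (hb : b < b')
    (h : ∀ e ∈ F, b < a e) : ∃ y, b < y ∧ y < b' ∧ ∀ e ∈ F, y < a e := by
  obtain ⟨y, h1, h2, h3⟩ := fin_lt hF (fun e => - a e) (b := -b) (b' := -b') (by linarith)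
    (fun e he => by have := h e he; linarith)
  exact ⟨-y, by linarith, by linarith, fun e he => by have := h3 e he; linarith⟩

theorem cut_lowerSet {G : BHyp t} {l : G.V → ℝ} {k : ℕ} (hl : ∀ i : ℝ, (G.cutAt l i).encard ≤ k)
    (c : LowerSet ℝ) : (HC (lpos G l) c).encard ≤ k := by
  have := encard_le_of_finite (HC (lpos G l) c) 0 k ?_
  · simpa using this
  intro F hF hfin
  simp only [Nat.cast_zero, add_zero]
  rcases F.eq_empty_or_nonempty with rfl | hne
  · simp
  have h : ∀ e, ∃ a b : ℝ, e ∈ F → (a ∈ lpos G l e ∧ a ∈ c) ∧ (b ∈ lpos G l e ∧ b ∉ c) := by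
    intro e
    by_cases he : e ∈ F
    · obtain ⟨⟨a, ha⟩, ⟨b, hb⟩⟩ := hF he
      exact ⟨a, b, fun _ => ⟨ha, hb⟩⟩
    · exact ⟨0, 0, fun h => absurd h he⟩
  choose a b hab using h
  obtain ⟨e₀, he₀, hmin⟩ := Set.exists_min_image F b hfin hne
  obtain ⟨y, _, hy1, hy2⟩ := fin_lt hfin a (sub_one_lt (b e₀)) (fun e he => by
    by_contra hcon
    exact (hab e₀ he₀).2.2 (c.lower (not_lt.mp hcon) (hab e he).1.2))
  refine le_trans (Set.encard_le_encard ?_) (hl y)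
  intro e he
  obtain ⟨⟨⟨v, hv, hva⟩, _⟩, ⟨⟨v', hv', hvb⟩, _⟩⟩ := hab e he
  exact ⟨v, v', hv, hv', by rw [hva]; exact hy2 e he, by rw [hvb]; exact hy1.trans_le (hmin e he)⟩

theorem glue_cut {G H : BHyp t} {hgl : Gluable G H} {l : (glueHyp G H hgl).V → ℝ} {k : ℕ}
    (hl : ∀ i : ℝ, ((glueHyp G H hgl).cutAt l i).encard ≤ k) (c : LowerSet ℝ) :
    (HC (gp G (fun v => l (Sum.inl v)) (PH H (fun v => l (glueMapV G H hgl v)))) c).encard +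
      (HC (posH H (fun v => l (glueMapV G H hgl v))) c).encard ≤ k := by
  have h := cut_lowerSet hl c
  erw [encard_sum] at h
  convert h using 3
  · ext e
    change _ ↔ ((∃ p ∈ lpos (glueHyp G H hgl) l (Sum.inl e), p ∈ c) ∧
      ∃ p ∈ lpos (glueHyp G H hgl) l (Sum.inl e), p ∉ c)
    rw [lpos_inl]
    rfl
  · ext e
    change _ ↔ ((∃ p ∈ lpos (glueHyp G H hgl) l (Sum.inr e), p ∈ c) ∧
      ∃ p ∈ lpos (glueHyp G H hgl) l (Sum.inr e), p ∉ c)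
    rw [lpos_inr]
    rfl

end Glue

/-! ### Chains of cuts and the associated tests -/

section Chains
variable {t : ℕ} {K : Type}

/-- A finite chain of cuts from `⊥` to `⊤`; `J r` is the index of the bunch containing `r`. -/
structure Chain (pos : K → Set ℝ) (P Bd : Fin t → Set ℝ) where
  n : ℕ
  x : ℕ → LowerSet ℝ
  J : ℝ → ℕ
  one_le : ∀ r, 1 ≤ J r
  le_n : ∀ r, J r ≤ n
  mem : ∀ r j, j ≤ n → (r ∈ x j ↔ J r ≤ j)
  step : ∀ i < n, x i ⋖ x (i + 1) ∨ StepUp pos P Bd (x i) (x (i + 1)) ∨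
    StepDown pos P Bd (x i) (x (i + 1))

theorem exists_chain (pos : K → Set ℝ) (P Bd : Fin t → Set ℝ)
    (hBd : ∀ ℓ, (Bd ℓ).Subsingleton) (k : ℕ) (hk : ∀ c, (HC pos c).encard ≤ k) :
    Nonempty (Chain pos P Bd) := by
  classical
  obtain ⟨n, x, h0, hn, hx⟩ := subdiv pos P Bd hBd k hk
  have hmono : ∀ i j, i ≤ j → j ≤ n → x i ≤ x j := by
    intro i j hij
    induction j, hij using Nat.le_induction with
    | base => intro _; exact le_rfl
    | succ j hij ih => intro hj; exact (ih (by omega)).trans (hx j (by omega)).1.le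
  have hex : ∀ r : ℝ, ∃ j, r ∈ x j := fun r => ⟨n, by rw [hn]; trivial⟩
  refine ⟨⟨n, x, fun r => Nat.find (hex r), ?_, ?_, ?_, fun i hi => (hx i hi).2⟩⟩
  · intro r
    rw [Nat.one_le_iff_ne_zero]
    intro h
    have := Nat.find_spec (hex r)
    rw [h, h0] at this
    exact this
  · intro r
    exact Nat.find_min' _ (by rw [hn]; trivial)
  · intro r j hj
    constructor
    · intro h; exact Nat.find_min' _ h
    · intro h; exact hmono _ _ h hj (Nat.find_spec (hex r))

theorem covBy_point {x y : LowerSet ℝ} (h : x ⋖ y) {r s : ℝ} (hr : r ∉ x) (hr' : r ∈ y)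
    (hs : s ∉ x) (hs' : s ∈ y) : r = s := by
  have key : ∀ r s : ℝ, r ∉ x → r ∈ y → s ∈ y → ¬ r < s := by
    intro r s hr hr' hs' hlt
    have h1 : x ≤ LowerSet.Iic r := by
      intro a ha
      by_contra hc
      exact hr (x.lower (not_le.mp hc).le ha)
    have h2 : LowerSet.Iic r ≤ y := by
      intro a ha
      exact y.lower ha hr'
    rcases h.eq_or_eq h1 h2 with h3 | h3
    · exact hr (by rw [← h3]; exact le_refl r)
    · rw [← h3] at hs'
      exact absurd (show s ≤ r from hs') (not_le.mpr hlt)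
  rcases lt_trichotomy r s with h1 | h1 | h1
  · exact absurd h1 (key r s hr hr' hs')
  · exact h1
  · exact absurd h1 (key s r hs hs' hr')

namespace Chain
variable {pos : K → Set ℝ} {P Bd : Fin t → Set ℝ} (C : Chain pos P Bd)

theorem n_pos : 1 ≤ C.n := (C.one_le 0).trans (C.le_n 0)

theorem J_mono {r s : ℝ} (h : r ≤ s) : C.J r ≤ C.J s :=
  (C.mem r _ (C.le_n s)).mp ((C.x (C.J s)).lower h ((C.mem s _ (C.le_n s)).mpr le_rfl))

theorem x_mono {i j : ℕ} (h : i ≤ j) (hj : j ≤ C.n) : C.x i ≤ C.x j := by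
  intro r hr
  exact (C.mem r j hj).mpr (((C.mem r i (h.trans hj)).mp hr).trans h)

theorem step' (r : ℝ) : C.x (C.J r - 1) ⋖ C.x (C.J r) ∨
    StepUp pos P Bd (C.x (C.J r - 1)) (C.x (C.J r)) ∨
    StepDown pos P Bd (C.x (C.J r - 1)) (C.x (C.J r)) := by
  have h1 := C.one_le r
  have h2 := C.le_n r
  have := C.step (C.J r - 1) (by omega)
  rwa [Nat.sub_add_cancel h1] at this

theorem mem_self (r : ℝ) : r ∈ C.x (C.J r) := (C.mem r _ (C.le_n r)).mpr le_rfl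

theorem not_mem_pred (r : ℝ) : r ∉ C.x (C.J r - 1) := by
  have h1 := C.one_le r
  have h2 := C.le_n r
  rw [C.mem r _ (by omega)]
  omega

/-- Label sets of the test. -/
def El (j : ℕ) : Set (Fin t) :=
  {ℓ | 1 ≤ j ∧ j ≤ C.n ∧ (∃ p ∈ P ℓ, C.J p ≤ j) ∧ ∃ p ∈ P ℓ, j ≤ C.J p}

theorem El_left {ℓ : Fin t} {i j : ℕ} (hj : j ≤ C.n) (hij : i ≤ j) (h : ℓ ∈ C.El i) :
    ∃ p ∈ P ℓ, p ∈ C.x j := by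
  obtain ⟨_, _, ⟨p, hp, hpi⟩, _⟩ := h
  exact ⟨p, hp, (C.mem p j hj).mpr (hpi.trans hij)⟩

theorem El_right {ℓ : Fin t} {i j : ℕ} (hj : j ≤ C.n) (hij : j + 1 ≤ i) (h : ℓ ∈ C.El i) :
    ∃ p ∈ P ℓ, p ∉ C.x j := by
  obtain ⟨_, _, _, ⟨p, hp, hpi⟩⟩ := h
  exact ⟨p, hp, fun h => by have := (C.mem p j hj).mp h; omega⟩

theorem left_El {ℓ : Fin t} {j : ℕ} (hj : j ≤ C.n) (h : ∃ p ∈ P ℓ, p ∈ C.x j) :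
    ∃ i ≤ j, ℓ ∈ C.El i := by
  obtain ⟨p, hp, hpx⟩ := h
  exact ⟨C.J p, (C.mem p j hj).mp hpx, C.one_le p, C.le_n p, ⟨p, hp, le_rfl⟩, p, hp, le_rfl⟩

theorem right_El {ℓ : Fin t} {j : ℕ} (hj : j ≤ C.n) (h : ∃ p ∈ P ℓ, p ∉ C.x j) :
    ∃ i, j + 1 ≤ i ∧ ℓ ∈ C.El i := by
  obtain ⟨p, hp, hpx⟩ := h
  rw [C.mem p j hj] at hpx
  exact ⟨C.J p, by omega, C.one_le p, C.le_n p, ⟨p, hp, le_rfl⟩, p, hp, le_rfl⟩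

/-- The test attached to a chain. -/
noncomputable def test {k : ℕ} (hk : ∀ c, (HC pos c).encard ≤ k) (π : Fin t → Fin C.n) :
    CwTest t k where
  n := C.n
  π := π
  w := fun j => wt pos (C.x j)
  w_le := fun _ _ => wt_le hk _
  Elab := C.El
  Elab_convex := by
    rintro ℓ p q r hpq hqr ⟨h1, h2, ⟨a, ha, ha'⟩, _⟩ ⟨h3, h4, _, ⟨b, hb, hb'⟩⟩
    exact ⟨by omega, by omega, ⟨a, ha, by omega⟩, b, hb, by omega⟩
  Elab_bound := by
    intro i hi
    ext ℓ
    simp only [Set.mem_empty_iff_false, iff_false]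
    rintro ⟨_, h, _⟩
    omega

open Classical in
/-- Stretching of the line adapted to the chain. -/
noncomputable def phi (r : ℝ) : ℝ :=
  if StepUp pos P Bd (C.x (C.J r - 1)) (C.x (C.J r)) then C.J r - 1 / 2 + Real.sigmoid r / 2
  else if StepDown pos P Bd (C.x (C.J r - 1)) (C.x (C.J r)) then C.J r + Real.sigmoid r / 2
  else C.J r

theorem phi_bounds (r : ℝ) : (C.J r : ℝ) - 1 / 2 < C.phi r ∧ C.phi r < C.J r + 1 / 2 := by
  have h1 := Real.sigmoid_pos r
  have h2 := Real.sigmoid_lt_one r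
  unfold phi
  split_ifs <;> constructor <;> linarith

theorem phi_strictMono : StrictMono C.phi := by
  intro r s hrs
  rcases (C.J_mono hrs.le).lt_or_eq with h | h
  · have h1 := (C.phi_bounds r).2
    have h2 := (C.phi_bounds s).1
    have h3 : (C.J r : ℝ) + 1 ≤ C.J s := by exact_mod_cast h
    linarith
  · have h1 := Real.sigmoid_strictMono hrs
    have h4 := C.mem_self r
    have h5 := C.not_mem_pred r
    have h6 := C.step' r
    unfold phi
    rw [h] at h4 h5 h6 ⊢
    split_ifs with h2 h3
    · linarith
    · linarith
    · rcases h6 with h6 | h6 | h6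
      · exact absurd (covBy_point h6 h5 h4 (C.not_mem_pred s) (C.mem_self s)) hrs.ne
      · exact absurd h6 h2
      · exact absurd h6 h3

theorem phi_up {r : ℝ} (h : StepUp pos P Bd (C.x (C.J r - 1)) (C.x (C.J r))) :
    (C.J r : ℝ) - 1 < C.phi r ∧ C.phi r < C.J r := by
  have h1 := Real.sigmoid_pos r
  have h2 := Real.sigmoid_lt_one r
  unfold phi
  rw [if_pos h]
  constructor <;> linarith

theorem phi_notup {r : ℝ} (h : ¬ StepUp pos P Bd (C.x (C.J r - 1)) (C.x (C.J r))) :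
    (C.J r : ℝ) ≤ C.phi r := by
  have h1 := Real.sigmoid_pos r
  unfold phi
  rw [if_neg h]
  split_ifs <;> linarith

theorem phi_notdown {r : ℝ} (h : ¬ StepDown pos P Bd (C.x (C.J r - 1)) (C.x (C.J r))) :
    C.phi r ≤ C.J r := by
  have h2 := Real.sigmoid_lt_one r
  unfold phi
  rw [if_neg h]
  split_ifs <;> linarith

theorem phi_down {r : ℝ} (h' : ¬ StepUp pos P Bd (C.x (C.J r - 1)) (C.x (C.J r)))
    (h : StepDown pos P Bd (C.x (C.J r - 1)) (C.x (C.J r))) :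
    (C.J r : ℝ) < C.phi r ∧ C.phi r < C.J r + 1 := by
  have h1 := Real.sigmoid_pos r
  have h2 := Real.sigmoid_lt_one r
  unfold phi
  rw [if_neg h', if_pos h]
  constructor <;> linarith

theorem phi_Bd {ℓ : Fin t} {r : ℝ} (h : r ∈ Bd ℓ) : C.phi r = C.J r := by
  have h1 : ¬ StepUp pos P Bd (C.x (C.J r - 1)) (C.x (C.J r)) :=
    fun h' => C.not_mem_pred r (h'.1 ℓ r h (C.mem_self r))
  have h2 : ¬ StepDown pos P Bd (C.x (C.J r - 1)) (C.x (C.J r)) :=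
    fun h' => C.not_mem_pred r (h'.1 ℓ r h (C.mem_self r))
  unfold phi
  rw [if_neg h1, if_neg h2]

/-- The cut of the original line corresponding to `y`. -/
noncomputable def cy (y : ℝ) : LowerSet ℝ :=
  ⟨{r | C.phi r < y}, fun _ _ h1 h2 => (C.phi_strictMono.monotone h1).trans_lt h2⟩

theorem mem_cy {y r : ℝ} : r ∈ C.cy y ↔ C.phi r < y := Iff.rfl

theorem sig_cy {y : ℝ} {j : ℕ} (hj : j ≤ C.n) (h1 : (j : ℝ) < y) (h2 : y < j + 1) :
    SigLe pos P (C.x j) (C.cy y) := by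
  -- general position of bunches
  have hlow : ∀ r, C.J r < j → C.phi r < y := by
    intro r hr
    have := (C.phi_bounds r).2
    have h3 : (C.J r : ℝ) + 1 ≤ j := by exact_mod_cast hr
    linarith
  have hhigh : ∀ r, j + 1 < C.J r → ¬ C.phi r < y := by
    intro r hr
    have := (C.phi_bounds r).1
    have h3 : ((j + 1 : ℕ) : ℝ) + 1 ≤ C.J r := by exact_mod_cast hr
    push_cast at h3
    linarith
  by_cases hA : ∃ r, C.J r = j ∧ ¬ C.phi r < y
  · obtain ⟨r, hr, hry⟩ := hA
    have hd : StepDown pos P Bd (C.x (C.J r - 1)) (C.x (C.J r)) := by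
      by_contra h
      have := C.phi_notdown h
      rw [hr] at this
      linarith
    have hr1 := C.one_le r
    rw [hr] at hd hr1
    refine (hd.2 (C.cy y) ?_ ?_).1
    · intro s hs
      have := (C.mem s _ (by omega)).mp hs
      exact hlow s (by omega)
    · intro s hs
      have hs' : s < r := C.phi_strictMono.lt_iff_lt.mp (lt_of_lt_of_le hs (not_lt.mp hry))
      exact (C.mem s j hj).mpr ((C.J_mono hs'.le).trans hr.le)
  · push Not at hA
    by_cases hB : ∃ r, C.J r = j + 1 ∧ C.phi r < y
    · obtain ⟨r, hr, hry⟩ := hB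
      have hu : StepUp pos P Bd (C.x (C.J r - 1)) (C.x (C.J r)) := by
        by_contra h
        have := C.phi_notup h
        rw [hr] at this
        push_cast at this
        linarith
      have hrn := C.le_n r
      rw [hr] at hu hrn
      simp only [Nat.add_sub_cancel] at hu
      refine (hu.2 (C.cy y) ?_ ?_).1
      · intro s hs
        rcases ((C.mem s _ hj).mp hs).lt_or_eq with h | h
        · exact hlow s h
        · exact hA s h
      · intro s hs
        refine (C.mem s _ hrn).mpr ?_
        by_contra hc
        exact hhigh s (by omega) hs
    · push Not at hB
      have : C.x j = C.cy y := by
        ext s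
        change s ∈ C.x j ↔ C.phi s < y
        rw [C.mem s j hj]
        constructor
        · intro h
          rcases h.lt_or_eq with h | h
          · exact hlow s h
          · exact hA s h
        · intro h
          by_contra hc
          rcases (show j + 1 ≤ C.J s by omega).lt_or_eq with h' | h'
          · exact hhigh s h' h
          · exact absurd h (not_lt.mpr (hB s h'.symm))
      rw [this]
      exact SigLe.rfl' _ _ _

/-- A point free of positions does not separate signatures. -/
theorem up_of_free {r : ℝ} (hP : ∀ ℓ, r ∉ P ℓ) (hpos : ∀ e, r ∉ pos e) (hBd : ∀ ℓ, r ∉ Bd ℓ)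
    (hcov : C.x (C.J r - 1) ⋖ C.x (C.J r)) :
    StepUp pos P Bd (C.x (C.J r - 1)) (C.x (C.J r)) := by
  have hiff : ∀ s, s ≠ r → (s ∈ C.x (C.J r - 1) ↔ s ∈ C.x (C.J r)) := by
    intro s hs
    constructor
    · exact fun h => hcov.le h
    · intro h
      by_contra hc
      exact hs (covBy_point hcov hc h (C.not_mem_pred r) (C.mem_self r))
  have hHC : HC pos (C.x (C.J r - 1)) = HC pos (C.x (C.J r)) := by
    ext e
    have h : ∀ p ∈ pos e, p ≠ r := fun p hp he => hpos e (he ▸ hp)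
    constructor
    · rintro ⟨⟨p, hp, h1⟩, q, hq, h2⟩
      exact ⟨⟨p, hp, (hiff p (h p hp)).mp h1⟩, q, hq, fun h' => h2 ((hiff q (h q hq)).mpr h')⟩
    · rintro ⟨⟨p, hp, h1⟩, q, hq, h2⟩
      exact ⟨⟨p, hp, (hiff p (h p hp)).mpr h1⟩, q, hq, fun h' => h2 ((hiff q (h q hq)).mp h')⟩
  have hne : ∀ ℓ, ∀ p ∈ P ℓ, p ≠ r := fun ℓ p hp he => hP ℓ (he ▸ hp)
  have hS : SigLe pos P (C.x (C.J r - 1)) (C.x (C.J r)) := by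
    refine ⟨by unfold wt; rw [hHC], ?_, ?_⟩
    · rintro ℓ ⟨p, hp, h⟩
      exact ⟨p, hp, (hiff p (hne ℓ p hp)).mp h⟩
    · rintro ℓ ⟨p, hp, h⟩
      exact ⟨p, hp, fun h' => h ((hiff p (hne ℓ p hp)).mpr h')⟩
  refine ⟨?_, ?_⟩
  · intro ℓ s hs h
    exact (hiff s (fun he => hBd ℓ (he ▸ hs))).mpr h
  · intro c h1 h2
    rcases hcov.eq_or_eq h1 h2 with rfl | rfl
    · exact ⟨SigLe.rfl' _ _ _, hS⟩
    · exact ⟨hS, SigLe.rfl' _ _ _⟩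

theorem passes {k : ℕ} (hk : ∀ c, (HC pos c).encard ≤ k) (π : Fin t → Fin C.n)
    (G : BHyp t) (g : G.V → ℝ) (hg : Function.Injective g)
    (hBdG : ∀ ℓ v, G.bnd ℓ = Sum.inl v → g v ∈ Bd ℓ)
    (hπ : ∀ ℓ, ∀ r ∈ Bd ℓ, (π ℓ : ℕ) + 1 = C.J r)
    (hfree : ∀ v, (∀ ℓ, G.bnd ℓ ≠ Sum.inl v) →
      (∀ ℓ, g v ∉ P ℓ) ∧ (∀ e, g v ∉ pos e) ∧ ∀ ℓ, g v ∉ Bd ℓ)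
    (hcut : ∀ c, (HC (gp G g P) c).encard + (HC pos c).encard ≤ k) :
    Passes G (C.test hk π) := by
  refine ⟨fun v => C.phi (g v), C.phi_strictMono.injective.comp hg, ?_, ?_, ?_⟩
  · intro ℓ v hv
    have h1 := hBdG ℓ v hv
    change C.phi (g v) = ((π ℓ : ℕ) : ℝ) + 1
    rw [C.phi_Bd h1, ← hπ ℓ _ h1]
    push_cast
    rfl
  · intro v hv
    change ∃ j : ℕ, j ≤ C.n ∧ _
    obtain ⟨f1, f2, f3⟩ := hfree v hv
    have hle := C.le_n (g v)
    by_cases hu : StepUp pos P Bd (C.x (C.J (g v) - 1)) (C.x (C.J (g v)))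
    · have h1 := C.phi_up hu
      refine ⟨C.J (g v) - 1, by omega, ?_⟩
      rw [Nat.cast_sub (C.one_le _)]
      push_cast
      exact ⟨h1.1, by linarith [h1.2]⟩
    · rcases C.step' (g v) with h | h | h
      · exact absurd (C.up_of_free f1 f2 f3 h) hu
      · exact absurd h hu
      · exact ⟨C.J (g v), hle, C.phi_down hu h⟩
  · intro y hy0 hyn hyint
    change y < (C.n : ℝ) + 1 at hyn
    set j := ⌊y⌋.toNat with hjdef
    have hj0 : 0 ≤ ⌊y⌋ := Int.floor_nonneg.mpr hy0.le
    have hjc : ((j : ℕ) : ℝ) = (⌊y⌋ : ℝ) := by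
      have : ((j : ℕ) : ℤ) = ⌊y⌋ := Int.toNat_of_nonneg hj0
      exact_mod_cast this
    have h1 : (j : ℝ) < y := by
      rw [hjc]
      refine lt_of_le_of_ne (Int.floor_le y) fun h => hyint ⟨⌊y⌋, h.symm⟩
    have h2 : y < j + 1 := by rw [hjc]; exact Int.lt_floor_add_one y
    have hj : j ≤ C.n := by
      have : (j : ℝ) < C.n + 1 := h1.trans hyn
      have : j < C.n + 1 := by exact_mod_cast this
      omega
    have hs := C.sig_cy hj h1 h2
    refine le_trans (add_le_add (Set.encard_le_encard ?_) ?_) (hcut (C.cy y))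
    · rintro e ⟨p, q, hp, hq, hpy, hqy⟩
      constructor
      · rcases hp with ⟨v, hv, rfl⟩ | ⟨ℓ, i, hℓ, hi, rfl⟩
        · exact ⟨g v, Or.inl ⟨v, hv, rfl⟩, hpy⟩
        · have hij : i ≤ j := by
            have : (i : ℝ) < j + 1 := hpy.trans h2
            have : i < j + 1 := by exact_mod_cast this
            omega
          obtain ⟨p, hp, hpc⟩ := hs.A ℓ (C.El_left hj hij hi)
          exact ⟨p, Or.inr ⟨ℓ, hℓ, hp⟩, hpc⟩
      · rcases hq with ⟨v, hv, rfl⟩ | ⟨ℓ, i, hℓ, hi, rfl⟩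
        · exact ⟨g v, Or.inl ⟨v, hv, rfl⟩, not_lt.mpr hqy.le⟩
        · have hij : j + 1 ≤ i := by
            have : (j : ℝ) < i := h1.trans hqy
            exact_mod_cast this
          obtain ⟨p, hp, hpc⟩ := hs.B ℓ (C.El_right hj hij hi)
          exact ⟨p, Or.inr ⟨ℓ, hℓ, hp⟩, hpc⟩
    · change ((wt pos (C.x j) : ℕ) : ℕ∞) ≤ _
      rw [← wt_cast hk]
      exact_mod_cast hs.wle

end Chain
end Chains

/-! ### From a passed test to a layout of the glued hypergraph -/

section Back
variable {t : ℕ}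

theorem glue_cutAt {G H : BHyp t} {hgl : Gluable G H} (l : (glueHyp G H hgl).V → ℝ) (i : ℝ)
    (SG : Set G.E) (SH : Set {e : H.E // ∀ i, H.bnd i ≠ Sum.inr e})
    (hG : ∀ e, (∃ p ∈ gp G (fun v => l (Sum.inl v)) (PH H (fun v => l (glueMapV G H hgl v))) e,
      p < i) → (∃ p ∈ gp G (fun v => l (Sum.inl v)) (PH H (fun v => l (glueMapV G H hgl v))) e,
      i < p) → e ∈ SG)
    (hH : ∀ e, (∃ p ∈ posH H (fun v => l (glueMapV G H hgl v)) e, p < i) →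
      (∃ p ∈ posH H (fun v => l (glueMapV G H hgl v)) e, i < p) → e ∈ SH) :
    ((glueHyp G H hgl).cutAt l i).encard ≤ SG.encard + SH.encard := by
  have h : ((glueHyp G H hgl).cutAt l i).encard =
      (Sum.inl ⁻¹' ((glueHyp G H hgl).cutAt l i) : Set G.E).encard +
      (Sum.inr ⁻¹' ((glueHyp G H hgl).cutAt l i) :
        Set {e : H.E // ∀ i, H.bnd i ≠ Sum.inr e}).encard := encard_sum _
  rw [h]
  refine add_le_add (Set.encard_le_encard ?_) (Set.encard_le_encard ?_)
  · rintro e ⟨v, w, hv, hw, h1, h2⟩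
    have := lpos_inl G H hgl l e
    exact hG e ⟨l v, by rw [← this]; exact ⟨v, hv, rfl⟩, h1⟩
      ⟨l w, by rw [← this]; exact ⟨w, hw, rfl⟩, h2⟩
  · rintro e ⟨v, w, hv, hw, h1, h2⟩
    have := lpos_inr G H hgl l e
    exact hH e ⟨l v, by rw [← this]; exact ⟨v, hv, rfl⟩, h1⟩
      ⟨l w, by rw [← this]; exact ⟨w, hw, rfl⟩, h2⟩

noncomputable def psi (f : ℝ) : ℝ := f + ⌊f⌋

theorem psi_strictMono : StrictMono psi := by
  intro a b h
  have : (⌊a⌋ : ℝ) ≤ ⌊b⌋ := by exact_mod_cast Int.floor_le_floor h.le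
  unfold psi
  linarith

theorem psi_nat (m : ℕ) : psi m = 2 * m := by
  unfold psi
  rw [Int.floor_natCast]
  push_cast
  ring

/-- below the integer `j`, the value is below `2 j - 1`. -/
theorem psi_lt {f : ℝ} {j : ℕ} (h : f < j) : psi f < 2 * j - 1 := by
  have h1 : ⌊f⌋ < (j : ℤ) := Int.floor_lt.mpr (by exact_mod_cast h)
  have h2 : (⌊f⌋ : ℝ) + 1 ≤ j := by exact_mod_cast h1
  unfold psi
  linarith

theorem psi_ge {f : ℝ} {j : ℕ} (h : (j : ℝ) ≤ f) : f + j ≤ psi f := by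
  have h1 : (j : ℤ) ≤ ⌊f⌋ := Int.le_floor.mpr (by exact_mod_cast h)
  have h2 : (j : ℝ) ≤ ⌊f⌋ := by exact_mod_cast h1
  unfold psi
  linarith

theorem psi_le {f : ℝ} {j : ℕ} (h : f < j + 1) : psi f ≤ f + j := by
  have h1 : ⌊f⌋ < (j : ℤ) + 1 := Int.floor_lt.mpr (by push_cast; exact h)
  have h2 : (⌊f⌋ : ℝ) ≤ j := by exact_mod_cast Int.lt_add_one_iff.mp h1
  unfold psi
  linarith

/-- The bound on one cut of the glued layout. -/
theorem core {k : ℕ} {G H : BHyp t} {hgl : Gluable G H} {h : H.V → ℝ} {Bd : Fin t → Set ℝ}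
    (C : Chain (posH H h) (PH H h) Bd) (hk : ∀ c, (HC (posH H h) c).encard ≤ k)
    (π : Fin t → Fin C.n) (f : G.V → ℝ)
    (hf : ∀ i : ℝ, 0 < i → i < (C.n : ℝ) + 1 → (¬ ∃ m : ℤ, i = (m : ℝ)) →
      (jointCut G (C.test hk π) f i).encard + (wt (posH H h) (C.x ⌊i⌋.toNat) : ℕ∞) ≤ k)
    (l : (glueHyp G H hgl).V → ℝ) (i : ℝ) (c : LowerSet ℝ) (j : ℕ) (hj : j ≤ C.n)
    (hs : SigLe (posH H h) (PH H h) c (C.x j))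
    (hHl : ∀ v, l (glueMapV G H hgl v) < i → h v ∈ c)
    (hHr : ∀ v, i < l (glueMapV G H hgl v) → h v ∉ c)
    (L R : ℝ → Prop)
    (hL : ∀ v, l (Sum.inl v) < i → L (f v)) (hL' : ∀ m : ℕ, m ≤ j → L m)
    (hR : ∀ v, i < l (Sum.inl v) → R (f v)) (hR' : ∀ m : ℕ, j + 1 ≤ m → R m)
    (hy : ∀ (F : Set G.E) (a b : G.E → ℝ), F.Finite → (∀ e ∈ F, L (a e)) → (∀ e ∈ F, R (b e)) →
      ∃ y, (j : ℝ) < y ∧ y < j + 1 ∧ (∀ e ∈ F, a e < y) ∧ ∀ e ∈ F, y < b e) :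
    ((glueHyp G H hgl).cutAt l i).encard ≤ k := by
  set SG : Set G.E := {e | (∃ p ∈ posSet G (C.test hk π) f e, L p) ∧
    ∃ p ∈ posSet G (C.test hk π) f e, R p} with hSG
  have h1 := glue_cutAt l i SG (HC (posH H h) c) ?_ ?_
  · refine h1.trans ?_
    have h2 : SG.encard + (wt (posH H h) (C.x j) : ℕ) ≤ k := by
      apply encard_le_of_finite
      intro F hF hfin
      have hch : ∀ e, ∃ a b : ℝ, e ∈ F → (a ∈ posSet G (C.test hk π) f e ∧ L a) ∧
          (b ∈ posSet G (C.test hk π) f e ∧ R b) := by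
        intro e
        by_cases he : e ∈ F
        · obtain ⟨⟨a, ha⟩, ⟨b, hb⟩⟩ := hF he
          exact ⟨a, b, fun _ => ⟨ha, hb⟩⟩
        · exact ⟨0, 0, fun h => absurd h he⟩
      choose a b hab using hch
      obtain ⟨y, y1, y2, ya, yb⟩ := hy F a b hfin (fun e he => (hab e he).1.2)
        (fun e he => (hab e he).2.2)
      have hfl : ⌊y⌋ = (j : ℤ) := Int.floor_eq_iff.mpr ⟨by exact_mod_cast y1.le, by
        exact_mod_cast y2⟩
      have h3 := hf y (lt_of_le_of_lt (Nat.cast_nonneg j) y1) (by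
        have : (j : ℝ) ≤ C.n := by exact_mod_cast hj
        linarith) (by
        rintro ⟨m, rfl⟩
        rw [Int.floor_intCast] at hfl
        rw [hfl] at y1
        exact lt_irrefl _ (by exact_mod_cast y1))
      rw [hfl, Int.toNat_natCast] at h3
      refine le_trans (add_le_add (Set.encard_le_encard ?_) le_rfl) h3
      intro e he
      exact ⟨a e, b e, (hab e he).1.1, (hab e he).2.1, ya e he, yb e he⟩
    refine le_trans (add_le_add le_rfl ?_) h2
    rw [← wt_cast hk]
    exact_mod_cast hs.wle
  · rintro e ⟨p, hp, hpi⟩ ⟨q, hq, hqi⟩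
    constructor
    · rcases hp with ⟨v, hv, rfl⟩ | ⟨ℓ, hℓ, v, e', hm, hc, rfl⟩
      · exact ⟨f v, Or.inl ⟨v, hv, rfl⟩, hL v hpi⟩
      · obtain ⟨m, hm, hE⟩ := C.left_El hj (hs.A ℓ ⟨h v, ⟨v, e', hm, hc, rfl⟩, hHl v hpi⟩)
        exact ⟨m, Or.inr ⟨ℓ, m, hℓ, hE, rfl⟩, hL' m hm⟩
    · rcases hq with ⟨v, hv, rfl⟩ | ⟨ℓ, hℓ, v, e', hm, hc, rfl⟩
      · exact ⟨f v, Or.inl ⟨v, hv, rfl⟩, hR v hqi⟩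
      · obtain ⟨m, hm, hE⟩ := C.right_El hj (hs.B ℓ ⟨h v, ⟨v, e', hm, hc, rfl⟩, hHr v hqi⟩)
        exact ⟨m, Or.inr ⟨ℓ, m, hℓ, hE, rfl⟩, hR' m hm⟩
  · rintro e ⟨p, ⟨v, hv, rfl⟩, hpi⟩ ⟨q, ⟨w, hw, rfl⟩, hqi⟩
    exact ⟨⟨h v, ⟨v, hv, rfl⟩, hHl v hpi⟩, h w, ⟨w, hw, rfl⟩, hHr w hqi⟩

theorem back {k : ℕ} {G H : BHyp t} {hgl : Gluable G H} {h : H.V → ℝ} {Bd : Fin t → Set ℝ}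
    (C : Chain (posH H h) (PH H h) Bd) (hk : ∀ c, (HC (posH H h) c).encard ≤ k)
    (π : Fin t → Fin C.n) (hπ : ∀ ℓ, ∀ r ∈ Bd ℓ, (π ℓ : ℕ) + 1 = C.J r)
    (hB2 : ∀ ℓ v, G.bnd ℓ = Sum.inl v → (Bd ℓ).Nonempty)
    (hBH : ∀ v ℓ, chV H v ℓ → h v ∈ Bd ℓ)
    (hBH' : ∀ v, (∀ i, H.bnd i ≠ Sum.inl v) → ∀ ℓ, h v ∉ Bd ℓ)
    (hinj : ∀ v w, (∀ i, H.bnd i ≠ Sum.inl v) → (∀ i, H.bnd i ≠ Sum.inl w) → h v = h w → v = w)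
    (hpass : Passes G (C.test hk π)) : (glueHyp G H hgl).cutwidthAtMost k := by
  obtain ⟨f, finj, fB, fN, hf⟩ := hpass
  change ∀ ℓ v, G.bnd ℓ = Sum.inl v → f v = ((π ℓ : ℕ) : ℝ) + 1 at fB
  change ∀ v, (∀ ℓ, G.bnd ℓ ≠ Sum.inl v) → ∃ j : ℕ, j ≤ C.n ∧ (j : ℝ) < f v ∧ f v < (j : ℝ) + 1
    at fN
  -- a vertex at an integer position is a boundary vertex
  have fint : ∀ v (j : ℕ), f v = j → ∃ ℓ, ∃ r ∈ Bd ℓ, C.J r = j := by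
    intro v j hv
    by_cases hb : ∀ ℓ, G.bnd ℓ ≠ Sum.inl v
    · obtain ⟨m, _, h1, h2⟩ := fN v hb
      rw [hv] at h1 h2
      have h1 : m < j := by exact_mod_cast h1
      have h2 : j < m + 1 := by exact_mod_cast h2
      omega
    · push Not at hb
      obtain ⟨ℓ, hℓ⟩ := hb
      obtain ⟨r, hr⟩ := hB2 ℓ v hℓ
      refine ⟨ℓ, r, hr, ?_⟩
      have h1 := fB ℓ v hℓ
      rw [hv] at h1
      have h1 : j = (π ℓ : ℕ) + 1 := by exact_mod_cast h1
      rw [h1, hπ ℓ r hr]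
  have frange : ∀ v, 0 < f v ∧ f v < C.n + 1 := by
    intro v
    by_cases hb : ∀ ℓ, G.bnd ℓ ≠ Sum.inl v
    · obtain ⟨m, hm, h1, h2⟩ := fN v hb
      have hm : (m : ℝ) ≤ C.n := by exact_mod_cast hm
      exact ⟨lt_of_le_of_lt (Nat.cast_nonneg m) h1, by linarith⟩
    · push Not at hb
      obtain ⟨ℓ, hℓ⟩ := hb
      rw [fB ℓ v hℓ]
      have : ((π ℓ : ℕ) : ℝ) < C.n := by exact_mod_cast (π ℓ).2
      exact ⟨by positivity, by linarith⟩
  let l : (glueHyp G H hgl).V → ℝ := fun z => Sum.elim (fun v => psi (f v))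
    (fun v => 2 * (C.J (h v.1) : ℝ) - 1 + Real.sigmoid (h v.1)) z
  have lN : ∀ v : {v : H.V // ∀ i, H.bnd i ≠ Sum.inl v},
      l (Sum.inr v) = 2 * (C.J (h v.1) : ℝ) - 1 + Real.sigmoid (h v.1) := fun v => rfl
  have lG : ∀ v : G.V, l (Sum.inl v) = psi (f v) := fun v => rfl
  have hspec : ∀ v, ((∃ ℓ, h v ∈ Bd ℓ) ∧ l (glueMapV G H hgl v) = 2 * (C.J (h v) : ℝ)) ∨
      ((∀ ℓ, h v ∉ Bd ℓ) ∧
        l (glueMapV G H hgl v) = 2 * (C.J (h v) : ℝ) - 1 + Real.sigmoid (h v)) := by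
    intro v
    cases hz : glueMapV G H hgl v with
    | inl u =>
      left
      obtain ⟨ℓ, hc, hu⟩ := (glueMapV_inl G H hgl v u).mp hz
      have hB := hBH v ℓ hc
      refine ⟨⟨ℓ, hB⟩, ?_⟩
      change psi (f u) = _
      rw [fB ℓ u hu, ← hπ ℓ _ hB]
      have := psi_nat ((π ℓ : ℕ) + 1)
      push_cast at this ⊢
      exact this
    | inr u =>
      right
      have := (glueMapV_inr G H hgl v u).mp hz
      subst this
      exact ⟨hBH' _ u.2, rfl⟩
  have hJ1 : ∀ r, (1 : ℝ) ≤ C.J r := fun r => by exact_mod_cast C.one_le r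
  have hJn : ∀ r, (C.J r : ℝ) ≤ C.n := fun r => by exact_mod_cast C.le_n r
  have s0 := Real.sigmoid_pos
  have s1 := Real.sigmoid_lt_one
  have hHrange : ∀ v, 2 * (C.J (h v) : ℝ) - 1 < l (glueMapV G H hgl v) ∧
      l (glueMapV G H hgl v) ≤ 2 * (C.J (h v) : ℝ) := by
    intro v
    have := s0 (h v)
    have := s1 (h v)
    rcases hspec v with ⟨_, e⟩ | ⟨_, e⟩ <;> rw [e] <;> constructor <;> linarith
  refine ⟨l, ?_, ?_⟩
  · -- injectivity
    have hmix : ∀ (v : G.V) (w : {v : H.V // ∀ i, H.bnd i ≠ Sum.inl v}),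
        l (Sum.inl v) ≠ l (Sum.inr w) := by
      intro v w he
      rw [lG, lN] at he
      have := s0 (h w.1)
      have := s1 (h w.1)
      rcases lt_or_ge (f v) (C.J (h w.1)) with h1 | h1
      · have := psi_lt h1
        linarith
      · have := psi_ge h1
        linarith
    rintro (v | v) (w | w) he
    · exact congrArg _ (finj (psi_strictMono.injective he))
    · exact absurd he (hmix v w)
    · exact absurd he.symm (hmix w v)
    · rw [lN, lN] at he
      have a1 := s0 (h v.1)
      have a2 := s1 (h v.1)
      have a3 := s0 (h w.1)
      have a4 := s1 (h w.1)
      have hJ : C.J (h v.1) = C.J (h w.1) := by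
        apply le_antisymm
        · by_contra hc
          have : (C.J (h w.1) : ℝ) + 1 ≤ C.J (h v.1) := by exact_mod_cast not_le.mp hc
          linarith
        · by_contra hc
          have : (C.J (h v.1) : ℝ) + 1 ≤ C.J (h w.1) := by exact_mod_cast not_le.mp hc
          linarith
      rw [hJ] at he
      have h2 : h v.1 = h w.1 := Real.sigmoid_strictMono.injective (by linarith)
      exact congrArg _ (Subtype.ext (hinj _ _ v.2 w.2 h2))
  · intro i
    by_cases hi0 : i ≤ 0
    · refine le_trans (glue_cutAt l i ∅ ∅ ?_ ?_) (by simp)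
      · rintro e ⟨p, hp, hpi⟩ _
        exfalso
        rcases hp with ⟨v, hv, rfl⟩ | ⟨ℓ, hℓ, v, e', hm, hc, rfl⟩
        · have h1 := (frange v).1
          have := psi_ge (f := f v) (j := 0) (by simpa using h1.le)
          change psi (f v) < i at hpi
          push_cast at this
          linarith
        · have := (hHrange v).1
          have := hJ1 (h v)
          linarith
      · rintro e ⟨p, ⟨v, hv, rfl⟩, hpi⟩ _
        exfalso
        have := (hHrange v).1
        have := hJ1 (h v)
        linarith
    by_cases hin : 2 * (C.n : ℝ) + 1 ≤ i
    · refine le_trans (glue_cutAt l i ∅ ∅ ?_ ?_) (by simp)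
      · rintro e _ ⟨p, hp, hpi⟩
        exfalso
        rcases hp with ⟨v, hv, rfl⟩ | ⟨ℓ, hℓ, v, e', hm, hc, rfl⟩
        · have h1 := (frange v).2
          have := psi_le h1
          change i < psi (f v) at hpi
          linarith
        · have := (hHrange v).2
          have := hJn (h v)
          linarith
      · rintro e _ ⟨p, ⟨v, hv, rfl⟩, hpi⟩
        exfalso
        have := (hHrange v).2
        have := hJn (h v)
        linarith
    push Not at hi0 hin
    obtain ⟨j, hj1, hj2, hj3⟩ : ∃ j : ℕ, 1 ≤ j ∧ 2 * (j : ℝ) - 2 < i ∧ i ≤ 2 * j := by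
      refine ⟨⌈i / 2⌉₊, Nat.one_le_iff_ne_zero.mpr (Nat.ceil_pos.mpr (by linarith)).ne', ?_, ?_⟩
      · have := Nat.ceil_lt_add_one (show 0 ≤ i / 2 by linarith)
        linarith
      · have := Nat.le_ceil (i / 2)
        linarith
    obtain ⟨j, rfl⟩ : ∃ j', j = j' + 1 := ⟨j - 1, by omega⟩
    push_cast at hj2 hj3
    by_cases hodd : i < 2 * (j : ℝ) + 1
    · -- cut strictly between `2 j` and `2 j + 1`
      have hj : j ≤ C.n := by
        have : (j : ℝ) < C.n + 1 := by linarith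
        have : j < C.n + 1 := by exact_mod_cast this
        omega
      refine core C hk π f hf l i (C.x j) j hj (SigLe.rfl' _ _ _) ?_ ?_
        (fun p => p < i - j) (fun p => i - j < p) ?_ ?_ ?_ ?_ ?_
      · intro v hv
        rw [C.mem _ _ hj]
        have := (hHrange v).1
        have : (C.J (h v) : ℝ) < j + 1 := by linarith
        have : C.J (h v) < j + 1 := by exact_mod_cast this
        omega
      · intro v hv
        rw [C.mem _ _ hj]
        have := (hHrange v).2
        have : (j : ℝ) < C.J (h v) := by linarith
        have : j < C.J (h v) := by exact_mod_cast this
        omega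
      · intro v hv
        by_contra hc
        push Not at hc
        have := psi_ge (f := f v) (j := j) (by linarith)
        change psi (f v) < i at hv
        linarith
      · intro m hm
        have : (m : ℝ) ≤ j := by exact_mod_cast hm
        change (m : ℝ) < i - j
        linarith
      · intro v hv
        by_contra hc
        push Not at hc
        have := psi_le (f := f v) (j := j) (by linarith)
        change i < psi (f v) at hv
        linarith
      · intro m hm
        have : (j : ℝ) + 1 ≤ m := by exact_mod_cast hm
        change i - j < (m : ℝ)
        linarith
      · intro F a b _ ha hb
        exact ⟨i - j, by linarith, by linarith, ha, hb⟩
    push Not at hodd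
    have hj : j < C.n := by
      have : (j : ℝ) < C.n := by linarith
      exact_mod_cast this
    -- left and right vertices of `G`
    have gl : ∀ v, l (Sum.inl v) < i → f v < (j : ℝ) + 1 := by
      intro v hv
      by_contra hc
      push Not at hc
      have := psi_ge (f := f v) (j := j + 1) (by push_cast; exact hc)
      push_cast at this
      change psi (f v) < i at hv
      linarith
    have gr : ∀ v, i < l (Sum.inl v) → (j : ℝ) + 1 ≤ f v := by
      intro v hv
      by_contra hc
      push Not at hc
      have := psi_lt (f := f v) (j := j + 1) (by push_cast; exact hc)
      push_cast at this
      change i < psi (f v) at hv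
      linarith
    -- using the interval before `j + 1`
    have viaL : ∀ c, SigLe (posH H h) (PH H h) c (C.x j) →
        (∀ v, l (glueMapV G H hgl v) < i → h v ∈ c) →
        (∀ v, i < l (glueMapV G H hgl v) → h v ∉ c) →
        ((glueHyp G H hgl).cutAt l i).encard ≤ k := by
      intro c hs c1 c2
      refine core C hk π f hf l i c j hj.le hs c1 c2
        (fun p => p < (j : ℝ) + 1) (fun p => (j : ℝ) + 1 ≤ p) gl ?_ gr ?_ ?_
      · intro m hm
        have : (m : ℝ) ≤ j := by exact_mod_cast hm
        change (m : ℝ) < j + 1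
        linarith
      · intro m hm
        change (j : ℝ) + 1 ≤ m
        exact_mod_cast hm
      · intro F a b hF ha hb
        obtain ⟨y, y1, y2, y3⟩ := fin_lt hF a (lt_add_one (j : ℝ)) ha
        exact ⟨y, y1, y2, y3, fun e he => y2.trans_le (hb e he)⟩
    -- using the interval after `j + 1`
    have viaR : (∀ v, f v ≠ (j : ℝ) + 1) → ∀ c, SigLe (posH H h) (PH H h) c (C.x (j + 1)) →
        (∀ v, l (glueMapV G H hgl v) < i → h v ∈ c) →
        (∀ v, i < l (glueMapV G H hgl v) → h v ∉ c) →
        ((glueHyp G H hgl).cutAt l i).encard ≤ k := by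
      intro hne c hs c1 c2
      refine core C hk π f hf l i c (j + 1) hj hs c1 c2
        (fun p => p ≤ (j : ℝ) + 1) (fun p => (j : ℝ) + 1 < p) (fun v hv => (gl v hv).le) ?_
        (fun v hv => lt_of_le_of_ne (gr v hv) (hne v).symm) ?_ ?_
      · intro m hm
        change (m : ℝ) ≤ j + 1
        exact_mod_cast hm
      · intro m hm
        change (j : ℝ) + 1 < m
        exact_mod_cast hm
      · intro F a b hF ha hb
        obtain ⟨y, y1, y2, y3⟩ := fin_gt hF b (lt_add_one ((j : ℝ) + 1)) hb
        push_cast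
        exact ⟨y, y1, y2, fun e he => (ha e he).trans_lt y1, y3⟩
    -- bunches of vertices of `H`
    have hl : ∀ v, l (glueMapV G H hgl v) < i → C.J (h v) ≤ j + 1 := by
      intro v hv
      have := (hHrange v).1
      have : (C.J (h v) : ℝ) < j + 1 + 1 := by linarith
      have : C.J (h v) < j + 1 + 1 := by exact_mod_cast this
      omega
    have hr : ∀ v, i < l (glueMapV G H hgl v) → j + 1 ≤ C.J (h v) := by
      intro v hv
      have := (hHrange v).2
      have : (j : ℝ) < C.J (h v) := by linarith
      exact_mod_cast this
    by_cases hA : ∃ ℓ, ∃ r ∈ Bd ℓ, C.J r = j + 1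
    · obtain ⟨ℓ, r, hrB, hrJ⟩ := hA
      have hstep := C.step' r
      have n1 := C.not_mem_pred r
      have n2 := C.mem_self r
      rw [hrJ] at hstep n1 n2
      simp only [Nat.add_sub_cancel] at hstep n1
      have hcov : C.x j ⋖ C.x (j + 1) := by
        rcases hstep with h' | h' | h'
        · exact h'
        · exact absurd (h'.1 ℓ r hrB n2) n1
        · exact absurd (h'.1 ℓ r hrB n2) n1
      refine viaL (C.x j) (SigLe.rfl' _ _ _) ?_ ?_
      · intro v hv
        rw [C.mem _ _ hj.le]
        by_contra hc
        have hJv : C.J (h v) = j + 1 := by have := hl v hv; omega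
        have m1 := C.not_mem_pred (h v)
        have m2 := C.mem_self (h v)
        rw [hJv] at m1 m2
        simp only [Nat.add_sub_cancel] at m1
        have hvr := covBy_point hcov m1 m2 n1 n2
        rcases hspec v with ⟨_, e⟩ | ⟨e, _⟩
        · rw [e, hJv] at hv
          push_cast at hv
          linarith
        · exact e ℓ (hvr ▸ hrB)
      · intro v hv
        rw [C.mem _ _ hj.le]
        have := hr v hv
        omega
    · have hne : ∀ v, f v ≠ (j : ℝ) + 1 := by
        intro v hv
        exact hA (fint v (j + 1) (by push_cast; exact hv))
      let c : LowerSet ℝ := ⟨{r | C.J r ≤ j ∨ (C.J r ≤ j + 1 ∧ 2 * (j : ℝ) + 1 + Real.sigmoid r < i)}, by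
        intro a b hab hb
        have h1 := C.J_mono hab
        have h2 := Real.sigmoid_strictMono.monotone hab
        rcases hb with hb | ⟨hb, hb'⟩
        · exact Or.inl (h1.trans hb)
        · exact Or.inr ⟨h1.trans hb, by linarith⟩⟩
      have mc : ∀ r, r ∈ c ↔ (C.J r ≤ j ∨ (C.J r ≤ j + 1 ∧ 2 * (j : ℝ) + 1 + Real.sigmoid r < i)) :=
        fun r => Iff.rfl
      have val : ∀ v, C.J (h v) = j + 1 →
          l (glueMapV G H hgl v) = 2 * (j : ℝ) + 1 + Real.sigmoid (h v) := by
        intro v hv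
        rcases hspec v with ⟨⟨ℓ, e⟩, _⟩ | ⟨_, e⟩
        · exact absurd ⟨ℓ, _, e, hv⟩ hA
        · rw [e, hv]
          push_cast
          ring
      have c1 : ∀ v, l (glueMapV G H hgl v) < i → h v ∈ c := by
        intro v hv
        rw [mc]
        rcases (hl v hv).lt_or_eq with e | e
        · left; omega
        · right
          rw [val v e] at hv
          exact ⟨e.le, hv⟩
      have c2 : ∀ v, i < l (glueMapV G H hgl v) → h v ∉ c := by
        intro v hv hc
        rw [mc] at hc
        have e1 := hr v hv
        rcases hc with hc | ⟨hc, hc'⟩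
        · omega
        · rw [val v (by omega)] at hv
          linarith
      have l1 : C.x j ≤ c := by
        intro r hr'
        exact Or.inl ((C.mem r j hj.le).mp hr')
      have l2 : c ≤ C.x (j + 1) := by
        intro r hr'
        rw [SetLike.mem_coe, C.mem r (j + 1) hj]
        rcases hr' with e | e
        · omega
        · exact e.1
      rcases C.step j hj with hs | hs | hs
      · rcases hs.eq_or_eq l1 l2 with e | e
        · exact viaL c (by rw [e]; exact SigLe.rfl' _ _ _) c1 c2
        · exact viaR hne c (by rw [e]; exact SigLe.rfl' _ _ _) c1 c2
      · exact viaR hne c (hs.2 c l1 l2).2 c1 c2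
      · exact viaL c (hs.2 c l1 l2).2 c1 c2

theorem chV_bnd {H : BHyp t} {v : H.V} {ℓ : Fin t} (h : chV H v ℓ) : H.bnd ℓ = Sum.inl v := by
  obtain ⟨h, rfl⟩ := h
  exact h.choose_spec

theorem one_direction {k : ℕ} (G₁ G₂ : BHyp t)
    (htests : ∀ T : CwTest t k, Passes G₁ T → Passes G₂ T)
    (H : BHyp t) (h₁ : Gluable G₁ H) (h₂ : Gluable G₂ H)
    (hcw : (glueHyp G₁ H h₁).cutwidthAtMost k) : (glueHyp G₂ H h₂).cutwidthAtMost k := by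
  classical
  obtain ⟨l, linj, hl⟩ := hcw
  set g : G₁.V → ℝ := fun v => l (Sum.inl v) with hg
  set h : H.V → ℝ := fun v => l (glueMapV G₁ H h₁ v) with hh
  have hcut := glue_cut hl
  have hk : ∀ c, (HC (posH H h) c).encard ≤ k := fun c => le_trans le_add_self (hcut c)
  let Bd : Fin t → Set ℝ := fun ℓ => {r | ∃ v, G₁.bnd ℓ = Sum.inl v ∧ g v = r}
  have hBd : ∀ ℓ, (Bd ℓ).Subsingleton := by
    rintro ℓ r ⟨v, hv, rfl⟩ s ⟨w, hw, rfl⟩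
    rw [hv] at hw
    cases hw
    rfl
  obtain ⟨C⟩ := exists_chain (posH H h) (PH H h) Bd hBd k hk
  have hπex : ∀ ℓ, ∃ p : Fin C.n, ∀ r ∈ Bd ℓ, (p : ℕ) + 1 = C.J r := by
    intro ℓ
    by_cases hne : (Bd ℓ).Nonempty
    · obtain ⟨r, hr⟩ := hne
      have a1 := C.one_le r
      have a2 := C.le_n r
      refine ⟨⟨C.J r - 1, by omega⟩, fun s hs => ?_⟩
      rw [hBd ℓ hs hr]
      exact Nat.sub_add_cancel a1
    · exact ⟨⟨0, C.n_pos⟩, fun r hr => absurd ⟨r, hr⟩ hne⟩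
  choose π hπ using hπex
  have ginj : Function.Injective g := fun a b hab => Sum.inl_injective (linj hab)
  have key : ∀ (u : G₁.V) (v : H.V), h v = g u → ∃ ℓ, chV H v ℓ ∧ G₁.bnd ℓ = Sum.inl u :=
    fun u v e => (glueMapV_inl G₁ H h₁ v u).mp (linj e)
  have hp1 : Passes G₁ (C.test hk π) := by
    refine C.passes hk π G₁ g ginj (fun ℓ v hv => ⟨v, hv, rfl⟩) hπ ?_ hcut
    intro u hu
    refine ⟨?_, ?_, ?_⟩
    · rintro ℓ ⟨v, e, _, _, hv⟩
      obtain ⟨ℓ', _, h3⟩ := key u v hv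
      exact hu ℓ' h3
    · rintro e ⟨v, _, hv⟩
      obtain ⟨ℓ', _, h3⟩ := key u v hv
      exact hu ℓ' h3
    · rintro ℓ ⟨w, hw, hwu⟩
      cases ginj hwu
      exact hu ℓ hw
  refine back C hk π hπ ?_ ?_ ?_ ?_ (htests _ hp1)
  · intro ℓ v hv
    have e1 := h₁ ℓ
    have e2 := h₂ ℓ
    rw [hv] at e2
    rw [← e2] at e1
    obtain ⟨u, hu⟩ := Sum.isLeft_iff.mp (show (G₁.bnd ℓ).isLeft = true from e1)
    exact ⟨g u, u, hu, rfl⟩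
  · intro v ℓ hc
    have e1 := h₁ ℓ
    rw [chV_bnd hc] at e1
    obtain ⟨u, hu⟩ := Sum.isLeft_iff.mp (show (G₁.bnd ℓ).isLeft = true from e1)
    refine ⟨u, hu, ?_⟩
    change l (Sum.inl u) = l (glueMapV G₁ H h₁ v)
    rw [(glueMapV_inl G₁ H h₁ v u).mpr ⟨ℓ, hc, hu⟩]
  · rintro v hv ℓ ⟨u, hu, hgu⟩
    obtain ⟨ℓ', h3, _⟩ := key u v hgu.symm
    exact hv ℓ' (chV_bnd h3)
  · intro v w hv hw e
    have e1 := (glueMapV_inr G₁ H h₁ v ⟨v, hv⟩).mpr rfl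
    have e2 : glueMapV G₁ H h₁ v = glueMapV G₁ H h₁ w := linj e
    rw [e1] at e2
    exact ((glueMapV_inr G₁ H h₁ w ⟨v, hv⟩).mp e2.symm).symm

end Back

/-- if two `t`-boundaried hypergraphs pass exactly the same
cutwidth-`k` tests, then for every `t`-boundaried hypergraph `H`, the glued
hypergraph `G₁ ⊕ H` has cutwidth at most `k` iff `G₂ ⊕ H` does. -/
theorem same_tests_same_cutwidth {t k : ℕ} (G₁ G₂ : BHyp t)
    (htests : ∀ T : CwTest t k, Passes G₁ T ↔ Passes G₂ T)
    (H : BHyp t) (h₁ : Gluable G₁ H) (h₂ : Gluable G₂ H) :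
    ((glueHyp G₁ H h₁).cutwidthAtMost k ↔ (glueHyp G₂ H h₂).cutwidthAtMost k) := by
  exact ⟨one_direction G₁ G₂ (fun T => (htests T).mp) H h₁ h₂,
    one_direction G₂ G₁ (fun T => (htests T).mpr) H h₂ h₁⟩
end
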